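/- arXiv:1111.7263 — 9 statements merged into one kernel-verified Lean document; each statement's English description precedes it below -/
import Mathlib

section
/- Let k be a field of characteristic 0 and let 1 ≤ t ≤ n−1. Then there is a k-algebra isomorphism φ : A_t(n,n) → A_{n−t}(n,n) which is graded in the following sense: for every d ≥ 0, φ maps A_t(n,n) ∩ R_{td} bijectively onto A_{n−t}(n,n) ∩ R_{(n−t)d}, where R_e denotes the k-space of homogeneous polynomials of degree e in R = k[x_{ij} : 1 ≤ i,j ≤ n]. -/
open MvPolynomial

/-- The `s`-minor `[I|J]` of the generic `m × n` matrix `(x_{ij})`, as an element of the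
polynomial ring `k[x_{ij}]`: the determinant of the `s × s` submatrix with row indices `I`
and column indices `J` taken in increasing order. -/
noncomputable def genericMinor (k : Type*) [CommRing k] (m n s : ℕ)
    (I : Finset (Fin m)) (J : Finset (Fin n)) (hI : I.card = s) (hJ : J.card = s) :
    MvPolynomial (Fin m × Fin n) k :=
  Matrix.det (Matrix.of fun a b : Fin s =>
    MvPolynomial.X ((↑(I.orderIsoOfFin hI a) : Fin m), (↑(J.orderIsoOfFin hJ b) : Fin n)))

/-- `A_s(m,n)`: the `k`-subalgebra of `k[x_{ij}]` generated by the `s`-minors of the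
generic `m × n` matrix. -/
noncomputable def minorAlgebra (k : Type*) [CommRing k] (m n s : ℕ) :
    Subalgebra k (MvPolynomial (Fin m × Fin n) k) :=
  Algebra.adjoin k
    {p | ∃ (I : Finset (Fin m)) (J : Finset (Fin n)) (hI : I.card = s) (hJ : J.card = s),
      p = genericMinor k m n s I J hI hJ}

/-!
By Jacobi's complementary minor theorem, replacing every entry of the generic matrix `X` by its
cofactor sends the minor `[I|J]` of size `t` to `det X ^ (t - 1)` times `± [Iᶜ|Jᶜ]`, and likewise
sends `± [Iᶜ|Jᶜ]` to `det X ^ (n - t - 1)` times `[I|J]`. On a form of degree `d` in the minors the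
power of `det X` factors out, and `det X` is a nonzerodivisor. Since the relations among minors of
a fixed size are generated by forms, the families `[I|J]` and `± [Iᶜ|Jᶜ]` satisfy the same
relations, and `[I|J] ↦ ± [Iᶜ|Jᶜ]` extends to the isomorphism.
-/

section FirstIsomorphism

variable {R P A B : Type*} [CommRing R] [CommRing P] [CommRing A] [CommRing B]
  [Algebra R P] [Algebra R A] [Algebra R B]

/-- The isomorphism `f.range ≃ g.range`, `f x ↦ g x`, between the ranges of two algebra
homomorphisms with the same kernel. -/
noncomputable def rangeEquivOfKerEq (f : P →ₐ[R] A) (g : P →ₐ[R] B)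
    (h : RingHom.ker f = RingHom.ker g) : f.range ≃ₐ[R] g.range :=
  (Ideal.quotientKerEquivRange f).symm.trans <|
    (Ideal.quotientEquivAlgOfEq R h).trans (Ideal.quotientKerEquivRange g)

theorem rangeEquivOfKerEq_rangeRestrict (f : P →ₐ[R] A) (g : P →ₐ[R] B)
    (h : RingHom.ker f = RingHom.ker g) (x : P) :
    rangeEquivOfKerEq f g h (f.rangeRestrict x) = g.rangeRestrict x := by
  have hf : (Ideal.quotientKerEquivRange f).symm (f.rangeRestrict x) = Ideal.Quotient.mk _ x := by
    rw [AlgEquiv.symm_apply_eq]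
    rfl
  simp only [rangeEquivOfKerEq, AlgEquiv.trans_apply, hf]
  rfl

theorem rangeEquivOfKerEq_symm (f : P →ₐ[R] A) (g : P →ₐ[R] B)
    (h : RingHom.ker f = RingHom.ker g) :
    (rangeEquivOfKerEq f g h).symm = rangeEquivOfKerEq g f h.symm :=
  rfl

theorem adjoin_range_units_smul {ι : Type*} (c : ι → ℤˣ) (f : ι → A) :
    Algebra.adjoin R (Set.range fun i => c i • f i) = Algebra.adjoin R (Set.range f) := by
  refine le_antisymm (Algebra.adjoin_le ?_) (Algebra.adjoin_le ?_) <;> rintro _ ⟨i, rfl⟩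
  · exact zsmul_mem (Algebra.subset_adjoin (Set.mem_range_self i)) _
  · rw [← inv_smul_smul (c i) (f i)]
    exact zsmul_mem (Algebra.subset_adjoin (Set.mem_range_self i)) _

end FirstIsomorphism

section Homogeneous

variable {k σ τ : Type*} [CommRing k]

theorem aeval_mul_of_isHomogeneous {A : Type*} [CommRing A] [Algebra k A] {F : MvPolynomial σ k}
    {d : ℕ} (hF : F.IsHomogeneous d) (q : A) (g : σ → A) :
    aeval (fun i => q * g i) F = q ^ d * aeval g F := by
  simp only [aeval_def, eval₂_eq, Finset.mul_sum]
  refine Finset.sum_congr rfl fun m hm => ?_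
  rw [hF.degree_eq_sum_deg_support hm]
  simp only [mul_pow, Finset.prod_mul_distrib, Finset.prod_pow_eq_pow_sum]
  ring

theorem homogeneousComponent_aeval {u : σ → MvPolynomial τ k} {a : ℕ} (ha : a ≠ 0)
    (hu : ∀ i, (u i).IsHomogeneous a) (F : MvPolynomial σ k) (d : ℕ) :
    homogeneousComponent (a * d) (aeval u F) = aeval u (homogeneousComponent d F) := by
  have hcomp (i : ℕ) : homogeneousComponent (a * d) (aeval u (homogeneousComponent i F)) =
      if i = d then aeval u (homogeneousComponent i F) else 0 := by
    rw [homogeneousComponent_of_mem ((homogeneousComponent_isHomogeneous i F).aeval u hu)]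
    simp only [Nat.mul_right_inj ha, eq_comm]
  conv_lhs => rw [← sum_homogeneousComponent F]
  simp only [map_sum, hcomp, Finset.sum_ite_eq', Finset.mem_range, Order.lt_add_one_iff]
  split_ifs with hd
  · rfl
  · rw [homogeneousComponent_eq_zero _ _ (not_le.mp hd), map_zero]

/-- On forms of degree `d` in the `u i`, the map `ψ` only introduces the factor `q ^ d`. -/
theorem ker_aeval_le_of_map_eq_mul {A : Type*} [CommRing A] [Algebra k A]
    {u : σ → MvPolynomial τ k} {v : σ → A} {a : ℕ} (ha : a ≠ 0)
    (hu : ∀ i, (u i).IsHomogeneous a) (ψ : MvPolynomial τ k →ₐ[k] A) {q : A} (hq : IsRegular q)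
    (hψ : ∀ i, ψ (u i) = q * v i) :
    RingHom.ker (aeval (R := k) u) ≤ RingHom.ker (aeval (R := k) v) := by
  intro F hF
  rw [RingHom.mem_ker] at hF ⊢
  rw [← sum_homogeneousComponent F, map_sum]
  refine Finset.sum_eq_zero fun d _ => (hq.pow d).left ?_
  calc q ^ d * aeval v (homogeneousComponent d F)
      = aeval (fun i => q * v i) (homogeneousComponent d F) :=
        (aeval_mul_of_isHomogeneous (homogeneousComponent_isHomogeneous d F) q v).symm
    _ = ψ (aeval u (homogeneousComponent d F)) := by simp only [← hψ, ← comp_aeval_apply]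
    _ = q ^ d * 0 := by rw [← homogeneousComponent_aeval ha hu, hF, map_zero, map_zero, mul_zero]

variable {u v : σ → MvPolynomial τ k} {a b : ℕ}

theorem isHomogeneous_rangeEquivOfKerEq (ha : a ≠ 0) (hu : ∀ i, (u i).IsHomogeneous a)
    (hv : ∀ i, (v i).IsHomogeneous b)
    (h : RingHom.ker (aeval (R := k) u) = RingHom.ker (aeval (R := k) v)) {d : ℕ}
    {x : (aeval (R := k) u).range} (hx : (x : MvPolynomial τ k).IsHomogeneous (a * d)) :
    (rangeEquivOfKerEq _ _ h x : MvPolynomial τ k).IsHomogeneous (b * d) := by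
  obtain ⟨F, rfl⟩ := (aeval (R := k) u).rangeRestrict_surjective x
  have hF : (aeval (R := k) u).rangeRestrict F =
      (aeval (R := k) u).rangeRestrict (homogeneousComponent d F) :=
    Subtype.ext <|
      (homogeneousComponent_eq_self hx).symm.trans (homogeneousComponent_aeval ha hu F d)
  rw [hF, rangeEquivOfKerEq_rangeRestrict]
  exact (homogeneousComponent_isHomogeneous d F).aeval v hv

theorem bijOn_rangeEquivOfKerEq (ha : a ≠ 0) (hb : b ≠ 0) (hu : ∀ i, (u i).IsHomogeneous a)
    (hv : ∀ i, (v i).IsHomogeneous b)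
    (h : RingHom.ker (aeval (R := k) u) = RingHom.ker (aeval (R := k) v)) (d : ℕ) :
    Set.BijOn (rangeEquivOfKerEq _ _ h)
      {x | (x : MvPolynomial τ k).IsHomogeneous (a * d)}
      {y | (y : MvPolynomial τ k).IsHomogeneous (b * d)} := by
  let φ := rangeEquivOfKerEq _ _ h
  refine Set.InvOn.bijOn (f' := φ.symm)
    ⟨fun x _ => φ.symm_apply_apply x, fun y _ => φ.apply_symm_apply y⟩
    (fun x hx => isHomogeneous_rangeEquivOfKerEq ha hu hv h hx) fun y hy => ?_
  rw [rangeEquivOfKerEq_symm]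
  exact isHomogeneous_rangeEquivOfKerEq hb hv hu h.symm hy

theorem isHomogeneous_det {m : Type*} [Fintype m] [DecidableEq m]
    {M : Matrix m m (MvPolynomial τ k)} {d : ℕ} (hM : ∀ i j, (M i j).IsHomogeneous d) :
    M.det.IsHomogeneous (Fintype.card m * d) := by
  rw [← mem_homogeneousSubmodule, Matrix.det_apply]
  refine sum_mem fun g _ => zsmul_mem ?_ _
  simpa using IsHomogeneous.prod Finset.univ (fun i => M (g i) i) (fun _ => d) fun i _ => hM _ _

end Homogeneous

section ComplementaryMinors

variable {R m p q : Type*} [CommRing R] [Fintype m] [DecidableEq m]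
  [Fintype p] [DecidableEq p] [Fintype q] [DecidableEq q]

theorem det_submatrix_equiv_equiv (M : Matrix m m R) (e f : p ≃ m) :
    (M.submatrix e f).det = Equiv.Perm.sign (e.symm.trans f) • M.det := by
  rw [Units.smul_def, zsmul_eq_mul, ← Matrix.det_permute', ← Matrix.det_submatrix_equiv_self e]
  simp [Function.comp_def]

theorem det_mul_det_toBlocks₁₁ {M N : Matrix (p ⊕ q) (p ⊕ q) R} {c : R} (h : M * N = c • 1) :
    M.det * N.toBlocks₁₁.det = c ^ Fintype.card p * M.toBlocks₂₂.det := by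
  rw [← M.fromBlocks_toBlocks, ← N.fromBlocks_toBlocks, Matrix.fromBlocks_multiply,
    ← Matrix.fromBlocks_one, Matrix.fromBlocks_smul, Matrix.fromBlocks_inj, smul_zero] at h
  have hprod : M * Matrix.fromBlocks N.toBlocks₁₁ 0 N.toBlocks₂₁ 1 =
      Matrix.fromBlocks (c • 1) M.toBlocks₁₂ 0 M.toBlocks₂₂ := by
    conv_lhs => rw [← M.fromBlocks_toBlocks]
    rw [Matrix.fromBlocks_multiply, h.1, h.2.2.1]
    simp
  simpa using congrArg Matrix.det hprod

theorem det_mul_det_adjugate_submatrix (M : Matrix m m R) (e f : p ⊕ q ≃ m) :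
    M.det * (M.adjugate.submatrix (f ∘ Sum.inl) (e ∘ Sum.inl)).det =
      Equiv.Perm.sign (e.symm.trans f) •
        (M.det ^ Fintype.card p * (M.submatrix (e ∘ Sum.inr) (f ∘ Sum.inr)).det) := by
  have hmul : M.submatrix e f * M.adjugate.submatrix f e = M.det • 1 := by
    rw [Matrix.submatrix_mul_equiv, Matrix.mul_adjugate, Matrix.submatrix_smul]
    simp [Matrix.submatrix_one_equiv]
  have hdet := det_mul_det_toBlocks₁₁ hmul
  rw [det_submatrix_equiv_equiv, smul_mul_assoc, smul_eq_iff_eq_inv_smul,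
    Int.units_inv_eq_self] at hdet
  exact hdet

/-- Jacobi's complementary minor theorem. -/
theorem det_adjugate_submatrix [Nonempty p] (M : Matrix m m R) (e f : p ⊕ q ≃ m) :
    (M.adjugate.submatrix (f ∘ Sum.inl) (e ∘ Sum.inl)).det =
      Equiv.Perm.sign (e.symm.trans f) •
        (M.det ^ (Fintype.card p - 1) * (M.submatrix (e ∘ Sum.inr) (f ∘ Sum.inr)).det) := by
  let X := Matrix.mvPolynomialX m m ℤ
  have hX : (X.adjugate.submatrix (f ∘ Sum.inl) (e ∘ Sum.inl)).det =
      Equiv.Perm.sign (e.symm.trans f) •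
        (X.det ^ (Fintype.card p - 1) * (X.submatrix (e ∘ Sum.inr) (f ∘ Sum.inr)).det) := by
    apply mul_left_cancel₀ (Matrix.det_mvPolynomialX_ne_zero m ℤ)
    rw [det_mul_det_adjugate_submatrix, mul_smul_comm, ← mul_assoc,
      mul_pow_sub_one Fintype.card_ne_zero]
  have hM := congrArg (aeval (R := ℤ) fun i : m × m => M i.1 i.2) hX
  simp only [Units.smul_def, map_zsmul, map_mul, map_pow, AlgHom.map_det,
    AlgHom.mapMatrix_apply, ← Matrix.submatrix_map] at hM
  simp only [← AlgHom.mapMatrix_apply, AlgHom.map_adjugate, X,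
    Matrix.mvPolynomialX_mapMatrix_aeval] at hM
  exact hM

end ComplementaryMinors

section CofactorSubstitution

variable (m R : Type*) [CommRing R] [Fintype m] [DecidableEq m]

theorem isRegular_det_mvPolynomialX : IsRegular (Matrix.mvPolynomialX m m R).det := by
  set X := Matrix.mvPolynomialX m m R with hX
  -- Translation by a scalar matrix `T • 1` makes the determinant monic in `T`.
  obtain ⟨shift, shift_X⟩ :
      ∃ shift : MvPolynomial (m × m) R →ₐ[R] Polynomial (MvPolynomial (m × m) R),
        ∀ i j, shift (X i j) = (-X).charmatrix i j :=
    ⟨aeval fun i => (-X).charmatrix i.1 i.2, fun _ _ => aeval_X _ _⟩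
  have shift_injective : Function.Injective shift := by
    have hid : ((Polynomial.aeval 0).restrictScalars R).comp shift =
        AlgHom.id R (MvPolynomial (m × m) R) := by
      ext1 i
      rw [AlgHom.comp_apply, AlgHom.id_apply, ← Matrix.mvPolynomialX_apply, ← hX, shift_X]
      simp [Matrix.charmatrix_apply, Matrix.diagonal_apply, apply_ite]
    exact Function.LeftInverse.injective (DFunLike.congr_fun hid)
  have shift_det : shift X.det = (-X).charpoly := by
    rw [AlgHom.map_det, Matrix.charpoly]
    congr 1
    ext1 i j
    exact shift_X i j
  refine isLeftRegular_iff_isRegular.mp fun F G (hFG : X.det * F = X.det * G) =>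
    shift_injective ((Matrix.charpoly_monic (-X)).isRegular.left ?_)
  have hshift := congrArg shift hFG
  rwa [map_mul, map_mul, shift_det] at hshift

/-- The substitution replacing each entry of the generic matrix by its cofactor. -/
noncomputable def cofactorSubst : MvPolynomial (m × m) R →ₐ[R] MvPolynomial (m × m) R :=
  aeval fun i => (Matrix.mvPolynomialX m m R).adjugate i.2 i.1

variable {m}

theorem cofactorSubst_det_submatrix {p : Type*} [Fintype p] [DecidableEq p] (a b : p → m) :
    cofactorSubst m R ((Matrix.mvPolynomialX m m R).submatrix a b).det =
      ((Matrix.mvPolynomialX m m R).adjugate.submatrix b a).det := by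
  rw [AlgHom.map_det, ← Matrix.det_transpose]
  congr 1
  ext i j
  simp [cofactorSubst]

end CofactorSubstitution

section MinorAlgebra

open Set.powersetCard (compl card_eq)

variable (k : Type*) [CommRing k] {n s t : ℕ}

/-- The minor `[I|J]` of the generic `n × n` matrix, indexed by pairs `(I, J)` of `t`-element
subsets. -/
noncomputable def minorFamily (p : Set.powersetCard (Fin n) t × Set.powersetCard (Fin n) t) :
    MvPolynomial (Fin n × Fin n) k :=
  genericMinor k n n t p.1 p.2 (card_eq p.1) (card_eq p.2)

theorem range_aeval_minorFamily :
    (aeval (R := k) (minorFamily k (n := n) (t := t))).range = minorAlgebra k n n t := by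
  rw [← Algebra.adjoin_range_eq_range_aeval, minorAlgebra]
  congr 1
  ext F
  constructor
  · rintro ⟨p, rfl⟩
    exact ⟨_, _, _, _, rfl⟩
  · rintro ⟨I, J, hI, hJ, rfl⟩
    exact ⟨(⟨I, hI⟩, ⟨J, hJ⟩), rfl⟩

theorem isHomogeneous_minorFamily (p : Set.powersetCard (Fin n) t × Set.powersetCard (Fin n) t) :
    (minorFamily k p).IsHomogeneous t := by
  have hcard : (minorFamily k p).IsHomogeneous (Fintype.card (Fin t) * 1) :=
    isHomogeneous_det fun _ _ => isHomogeneous_X _ _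
  rwa [Fintype.card_fin, mul_one] at hcard

variable (h : s + t = Fintype.card (Fin n))

/-- The shuffle permutation listing `I` in increasing order, followed by its complement in
increasing order. -/
noncomputable def shuffle (I : Set.powersetCard (Fin n) t) : Fin t ⊕ Fin s ≃ Fin n :=
  finSumEquivOfFinset (card_eq I) (card_eq (compl h I))

/-- The complementary minor `[Iᶜ|Jᶜ]` with the sign it carries in Laplace expansion and in
Jacobi's theorem. -/
noncomputable def signedComplMinorFamily
    (p : Set.powersetCard (Fin n) t × Set.powersetCard (Fin n) t) :
    MvPolynomial (Fin n × Fin n) k :=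
  Equiv.Perm.sign ((shuffle h p.1).symm.trans (shuffle h p.2)) •
    minorFamily k (compl h p.1, compl h p.2)

theorem range_aeval_signedComplMinorFamily :
    (aeval (R := k) (signedComplMinorFamily k h)).range = minorAlgebra k n n s := by
  have hsurj :
      Set.range (minorFamily k ∘ Prod.map (compl h) (compl h)) = Set.range (minorFamily k) :=
    ((compl h).prodCongr (compl h)).surjective.range_comp _
  rw [← range_aeval_minorFamily, ← Algebra.adjoin_range_eq_range_aeval,
    ← Algebra.adjoin_range_eq_range_aeval, ← hsurj]
  exact adjoin_range_units_smul _ _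

theorem isHomogeneous_signedComplMinorFamily
    (p : Set.powersetCard (Fin n) t × Set.powersetCard (Fin n) t) :
    (signedComplMinorFamily k h p).IsHomogeneous s :=
  zsmul_mem (K := homogeneousSubmodule (Fin n × Fin n) k s) (isHomogeneous_minorFamily k _) _

variable (p : Set.powersetCard (Fin n) t × Set.powersetCard (Fin n) t)

theorem minorFamily_eq_det_submatrix_inl :
    minorFamily k p = ((Matrix.mvPolynomialX (Fin n) (Fin n) k).submatrix
      (shuffle h p.1 ∘ Sum.inl) (shuffle h p.2 ∘ Sum.inl)).det :=
  rfl

theorem minorFamily_compl_eq_det_submatrix_inr :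
    minorFamily k (compl h p.1, compl h p.2) = ((Matrix.mvPolynomialX (Fin n) (Fin n) k).submatrix
      (shuffle h p.1 ∘ Sum.inr) (shuffle h p.2 ∘ Sum.inr)).det :=
  rfl

theorem cofactorSubst_minorFamily (ht : t ≠ 0) :
    cofactorSubst (Fin n) k (minorFamily k p) =
      (Matrix.mvPolynomialX (Fin n) (Fin n) k).det ^ (t - 1) * signedComplMinorFamily k h p := by
  have : NeZero t := ⟨ht⟩
  rw [minorFamily_eq_det_submatrix_inl k h, cofactorSubst_det_submatrix, det_adjugate_submatrix,
    signedComplMinorFamily, minorFamily_compl_eq_det_submatrix_inr, mul_smul_comm, Fintype.card_fin]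

theorem cofactorSubst_signedComplMinorFamily (hs : s ≠ 0) :
    cofactorSubst (Fin n) k (signedComplMinorFamily k h p) =
      (Matrix.mvPolynomialX (Fin n) (Fin n) k).det ^ (s - 1) * minorFamily k p := by
  have : NeZero s := ⟨hs⟩
  have hjacobi := det_adjugate_submatrix (Matrix.mvPolynomialX (Fin n) (Fin n) k)
    ((Equiv.sumComm _ _).trans (shuffle h p.1)) ((Equiv.sumComm _ _).trans (shuffle h p.2))
  have hsign : ((Equiv.sumComm _ _).trans (shuffle h p.1)).symm.trans
      ((Equiv.sumComm _ _).trans (shuffle h p.2)) =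
      (shuffle h p.1).symm.trans (shuffle h p.2) := by
    ext x
    simp
  rw [hsign, Fintype.card_fin] at hjacobi
  rw [signedComplMinorFamily, Units.smul_def, map_zsmul, ← Units.smul_def,
    minorFamily_compl_eq_det_submatrix_inr, cofactorSubst_det_submatrix, smul_eq_iff_eq_inv_smul,
    Int.units_inv_eq_self]
  exact hjacobi

theorem ker_aeval_minorFamily (hs : s ≠ 0) (ht : t ≠ 0) :
    RingHom.ker (aeval (R := k) (minorFamily k (n := n) (t := t))) =
      RingHom.ker (aeval (R := k) (signedComplMinorFamily k h)) :=
  le_antisymm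
    (ker_aeval_le_of_map_eq_mul ht (isHomogeneous_minorFamily k) (cofactorSubst (Fin n) k)
      ((isRegular_det_mvPolynomialX (Fin n) k).pow (t - 1))
      fun p => cofactorSubst_minorFamily k h p ht)
    (ker_aeval_le_of_map_eq_mul hs (isHomogeneous_signedComplMinorFamily k h)
      (cofactorSubst (Fin n) k) ((isRegular_det_mvPolynomialX (Fin n) k).pow (s - 1))
      fun p => cofactorSubst_signedComplMinorFamily k h p hs)

end MinorAlgebra

theorem minorAlgebra_duality_general (k : Type*) [CommRing k] {n s t : ℕ} (h : s + t = n)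
    (hs : s ≠ 0) (ht : t ≠ 0) :
    ∃ φ : minorAlgebra k n n t ≃ₐ[k] minorAlgebra k n n s,
      ∀ d : ℕ, Set.BijOn φ
        {x | (x : MvPolynomial (Fin n × Fin n) k).IsHomogeneous (t * d)}
        {y | (y : MvPolynomial (Fin n × Fin n) k).IsHomogeneous (s * d)} := by
  have hcard : s + t = Fintype.card (Fin n) := h.trans (Fintype.card_fin n).symm
  rw [← range_aeval_minorFamily k (t := t), ← range_aeval_signedComplMinorFamily k hcard]
  exact ⟨rangeEquivOfKerEq _ _ (ker_aeval_minorFamily k hcard hs ht),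
    bijOn_rangeEquivOfKerEq ht hs (isHomogeneous_minorFamily k)
      (isHomogeneous_signedComplMinorFamily k hcard) _⟩

/-- For a field `k` of characteristic `0` and `1 ≤ t ≤ n - 1`, there is a `k`-algebra
isomorphism `A_t(n,n) ≃ A_{n-t}(n,n)` which, for every `d`, maps the homogeneous elements
of degree `t·d` of `A_t(n,n)` bijectively onto the homogeneous elements of degree
`(n-t)·d` of `A_{n-t}(n,n)`. -/
theorem minorAlgebra_duality (k : Type*) [Field k] [CharZero k] (n t : ℕ)
    (ht : 1 ≤ t) (htn : t ≤ n - 1) :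
    ∃ φ : (minorAlgebra k n n t) ≃ₐ[k] (minorAlgebra k n n (n - t)),
      ∀ d : ℕ,
        Set.BijOn (fun x => (φ x : minorAlgebra k n n (n - t)))
          {x : minorAlgebra k n n t |
            MvPolynomial.IsHomogeneous (x : MvPolynomial (Fin n × Fin n) k) (t * d)}
          {y : minorAlgebra k n n (n - t) |
            MvPolynomial.IsHomogeneous (y : MvPolynomial (Fin n × Fin n) k) ((n - t) * d)} :=
  minorAlgebra_duality_general k (Nat.sub_add_cancel (by omega)) (by omega) (by omega)
end

section
/- For every commutative ring A and every 3×4 matrix X = (x_{ij}) over A, the determinant of the 3×3 matrix whose rows are indexed by the row pairs (1,2), (1,3), (2,3) and whose columns are indexed by the column pairs (1,2), (1,3), (1,4), with entry [ij|pq] in the row labelled (i,j) and column labelled (p,q), is zero. Explicitly, det [[ [12|12], [12|13], [12|14] ], [ [13|12], [13|13], [13|14] ], [ [23|12], [23|13], [23|14] ]] = 0. -/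
/-- The 2-minor `[ij|pq]` of a 3×4 matrix `x`: the determinant of the 2×2
submatrix with rows `i, j` and columns `p, q`. -/
def minor2 {A : Type*} [CommRing A] (x : Fin 3 → Fin 4 → A)
    (i j : Fin 3) (p q : Fin 4) : A :=
  x i p * x j q - x i q * x j p

/-!
Fix the column `c` of index `0`. Up to order and signs, the 2-minors formed from `c` and another
column `d` are the coordinates of `c ⨯₃ d`, so the determinant is the triple product of the vectors
`c ⨯₃ d₁`, `c ⨯₃ d₂`, `c ⨯₃ d₃`. By Lagrange's formula the cross product of the last two is a
multiple of `c`, and `c` is orthogonal to the first.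
-/

section

open Matrix

variable {A : Type*} [CommRing A]

theorem cross_cross_cross_same_left (u v w : Fin 3 → A) :
    (u ⨯₃ v) ⨯₃ (u ⨯₃ w) = -(v ⬝ᵥ u ⨯₃ w) • u := by
  rw [cross_cross_eq_smul_sub_smul, dot_self_cross, zero_smul, zero_sub, neg_smul]

theorem det_cross_same_left_eq_zero (u v w z : Fin 3 → A) :
    det ![u ⨯₃ v, u ⨯₃ w, u ⨯₃ z] = 0 := by
  rw [← triple_product_eq_det, cross_cross_cross_same_left, dotProduct_smul,
    dotProduct_comm (u ⨯₃ v), dot_self_cross, smul_zero]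

/-- The column `p` of `x`, reversed and with its middle entry negated. This rotation of the
coordinates makes the cross product of two columns list their 2-minors without signs, the row
pairs being in lexicographic order. -/
def signedColumn (x : Fin 3 → Fin 4 → A) (p : Fin 4) : Fin 3 → A :=
  ![x 2 p, -x 1 p, x 0 p]

theorem signedColumn_cross_signedColumn (x : Fin 3 → Fin 4 → A) (p q : Fin 4) :
    signedColumn x p ⨯₃ signedColumn x q =
      ![minor2 x 0 1 p q, minor2 x 0 2 p q, minor2 x 1 2 p q] := by
  apply vec3_eq <;> simp only [signedColumn, minor2, cons_val] <;> ring

end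

/-- The determinant of the 3×3 matrix of 2-minors of a generic 3×4 matrix, with rows
indexed by the row pairs (1,2), (1,3), (2,3) and columns by the column pairs
(1,2), (1,3), (1,4), vanishes. -/
theorem det_of_two_minors_eq_zero (A : Type*) [CommRing A] (x : Fin 3 → Fin 4 → A) :
    Matrix.det
      !![minor2 x 0 1 0 1, minor2 x 0 1 0 2, minor2 x 0 1 0 3;
         minor2 x 0 2 0 1, minor2 x 0 2 0 2, minor2 x 0 2 0 3;
         minor2 x 1 2 0 1, minor2 x 1 2 0 2, minor2 x 1 2 0 3] = 0 := by
  rw [← Matrix.det_transpose]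
  have det_columns := det_cross_same_left_eq_zero
    (signedColumn x 0) (signedColumn x 1) (signedColumn x 2) (signedColumn x 3)
  simp only [signedColumn_cross_signedColumn] at det_columns
  rw [Matrix.eta_fin_three (Matrix.transpose _)]
  exact det_columns
end

section
/- Let 1 ≤ t ≤ m ≤ n and let u, v ∈ {0,…,t} with u ≠ v and u+v even; assume m ≥ t+u and n ≥ t+v. Then the following identity holds in R: the sum over all ordered pairs (I,J) of disjoint u-element sets with I ∪ J = {t−u+1,…,t+u} and all ordered pairs (H,K) of disjoint v-element sets with H ∪ K = {t−v+1,…,t+v} of (−1)^{I,J} (−1)^{H,K} [{1,…,t−u}, I | {1,…,t−v}, H] · [{1,…,t−u}, J | {1,…,t−v}, K] equals 0. (These are the quadratic relations f_{u,v} among the t-minors of the generic m×n matrix.) -/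
open MvPolynomial

/-- The minor `[a₁,…,a_s | b₁,…,b_s]` of the generic `m × n` matrix `(x_{ij})`, where the
row indices `rows` and column indices `cols` are given as lists of 1-based natural
numbers: the determinant of the square submatrix of `(x_{ij})` with rows and columns
taken in the listed order. (The index `a ∈ {1,…,m}` corresponds to `a − 1 : Fin m`.) -/
noncomputable def listMinor (k : Type*) [CommRing k] (m n : ℕ) (rows cols : List ℕ) :
    MvPolynomial (Fin m × Fin n) k :=
  if h : 0 < m ∧ 0 < n then
    Matrix.det (Matrix.of fun i j : Fin rows.length =>
      MvPolynomial.X (⟨(rows.get i - 1) % m, Nat.mod_lt _ h.1⟩,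
        ⟨(cols.getD (j : ℕ) 0 - 1) % n, Nat.mod_lt _ h.2⟩))
  else 0

/-- The number of inversions of a list of natural numbers. -/
def invCount (l : List ℕ) : ℕ :=
  (Finset.univ.filter fun p : Fin l.length × Fin l.length =>
    p.1 < p.2 ∧ l.get p.2 < l.get p.1).card

/-- The increasing list of elements of a finite set of natural numbers. -/
def sortL (A : Finset ℕ) : List ℕ := A.sort (· ≤ ·)

/-!
By transposing we may assume `v < u`; then the sum over `I` already vanishes for each fixed `H`.
Let `P` and `W` be the rows `1, …, t - u` and `t - u + 1, …, t + u` of the matrix, and let the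
indices `b` and `c` denote restriction to the column lists of the two minors. The sum over `I` is
the Laplace expansion, along the first group of columns, of the determinant of order `2t` with rows
`(P_b, 0)`, `(0, P_c)` and `(W_b, W_c)`. Since `(P_b, 0) = (P_b, P_c) - (0, P_c)` and since `b` and
`c` only involve the columns `1, …, t + v`, this matrix factors through a free module of rank
`(t + v) + (t - u) < 2t`, so its determinant is zero.
-/

section BlockDeterminants

open Matrix

variable {R : Type*} [CommRing R]

theorem det_mul_eq_zero_of_card_lt {m n : Type*} [Fintype m] [DecidableEq m] [Fintype n]
    (h : Fintype.card n < Fintype.card m) (A : Matrix m n R) (B : Matrix n m R) :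
    (A * B).det = 0 := by
  classical
  have hzero : (detRowAlternating (R := R) (n := m)).compLinearMap B.vecMulLinear = 0 :=
    (Pi.basisFun R n).ext_alternating fun v hv =>
      absurd (Fintype.card_le_of_injective v hv) h.not_ge
  exact DFunLike.congr_fun hzero A

theorem det_submatrix_eq_zero_of_zero_block {m n : Type*} [Fintype n] [DecidableEq n]
    {A : Matrix m n R} (e : n ≃ m) {s : Finset m} {t : Finset n} (hcard : t.card < s.card)
    (hA : ∀ i ∈ s, ∀ j ∉ t, A i j = 0) : (A.submatrix e id).det = 0 := by
  rw [← det_transpose, det_apply]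
  refine Finset.sum_eq_zero fun σ _ => smul_eq_zero_of_right _ ?_
  obtain ⟨i, hi, hit⟩ := Finset.exists_mem_notMem_of_card_lt_card
    ((Finset.card_map (σ.symm.trans e).toEmbedding).trans_lt hcard)
  refine Finset.prod_eq_zero (Finset.mem_univ (e.symm i)) ?_
  exact hA _ (by simpa using hi) _ fun h => hit (Finset.mem_map.2 ⟨_, h, by simp⟩)

theorem card_compl_of_card_eq {p q : ℕ} {s : Finset (Fin (p + q))} (hs : s.card = p) :
    sᶜ.card = q := by
  rw [Finset.card_compl, hs, Fintype.card_fin, Nat.add_sub_cancel_left]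

/-- The `(p, q)`-shuffle of `s`: the permutation listing the `p` elements of `s` in increasing
order, followed by the elements of its complement in increasing order. -/
def shufflePerm {p q : ℕ} (s : {s : Finset (Fin (p + q)) // s.card = p}) :
    Equiv.Perm (Fin (p + q)) :=
  finSumFinEquiv.symm.trans (finSumEquivOfFinset s.2 (card_compl_of_card_eq s.2))

theorem shufflePerm_castAdd {p q : ℕ} (s : {s : Finset (Fin (p + q)) // s.card = p}) (i : Fin p) :
    shufflePerm s (Fin.castAdd q i) = s.1.orderEmbOfFin s.2 i := by
  simp [shufflePerm]

theorem shufflePerm_natAdd {p q : ℕ} (s : {s : Finset (Fin (p + q)) // s.card = p}) (j : Fin q) :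
    shufflePerm s (Fin.natAdd p j) = s.1ᶜ.orderEmbOfFin (card_compl_of_card_eq s.2) j := by
  simp [shufflePerm]

variable {ι κ : Type*} [Fintype ι] [DecidableEq ι] [Fintype κ] [DecidableEq κ] {p q : ℕ}

/-- Matches the rows of the block matrix of `blockDet` with its columns: the first `p` free rows
belong to the first group of columns, the last `q` to the second. -/
def blockRowEquiv (ι κ : Type*) (p q : ℕ) :
    (ι ⊕ Fin p) ⊕ (κ ⊕ Fin q) ≃ (ι ⊕ κ) ⊕ Fin (p + q) :=
  (Equiv.sumSumSumComm ι (Fin p) κ (Fin q)).trans (Equiv.sumCongr (Equiv.refl _) finSumFinEquiv)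

/-- The determinant with fixed upper rows `(P, 0)` and `(0, Q)`, as an alternating function of the
remaining `p + q` rows. -/
noncomputable def blockDet (P : Matrix ι (ι ⊕ Fin p) R) (Q : Matrix κ (κ ⊕ Fin q) R) :
    ((ι ⊕ Fin p) ⊕ (κ ⊕ Fin q) → R) [⋀^Fin (p + q)]→ₗ[R] R where
  __ := (detRowAlternating.domDomCongr (blockRowEquiv ι κ p q)).toMultilinearMap.currySum
    (fromBlocks P 0 0 Q)
  map_eq_zero_of_eq' w i j hw hij :=
    AlternatingMap.map_eq_zero_of_eq (detRowAlternating.domDomCongr (blockRowEquiv ι κ p q))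
      (fromRows (fromBlocks P 0 0 Q) w) (i := .inr i) (j := .inr j) hw (Sum.inr_injective.ne hij)

variable (P : Matrix ι (ι ⊕ Fin p) R) (Q : Matrix κ (κ ⊕ Fin q) R)

theorem blockDet_apply (w : Fin (p + q) → (ι ⊕ Fin p) ⊕ (κ ⊕ Fin q) → R) :
    blockDet P Q w =
      ((fromRows (fromBlocks P 0 0 Q) (of w)).submatrix (blockRowEquiv ι κ p q) id).det :=
  rfl

variable (B : Matrix (Fin (p + q)) (ι ⊕ Fin p) R) (C : Matrix (Fin (p + q)) (κ ⊕ Fin q) R)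

theorem blockDet_piecewise_eq_zero {s : Finset (Fin (p + q))} (hs : s.card ≠ p) :
    blockDet P Q (s.piecewise (fromCols B 0).row (fromCols 0 C).row) = 0 := by
  have hcompl : s.card + sᶜ.card = p + q := by rw [Finset.card_add_card_compl, Fintype.card_fin]
  rw [blockDet_apply]
  -- One of the two groups of columns supports more rows than it has columns.
  rcases hs.lt_or_gt with hlt | hlt
  · refine det_submatrix_eq_zero_of_zero_block _ (s := (Finset.univ.map .inr).disjSum sᶜ)
      (t := (∅ : Finset (ι ⊕ Fin p)).disjSum .univ) ?_ ?_
    · simp only [Finset.card_disjSum, Finset.card_empty, Finset.card_univ, Finset.card_map,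
        Fintype.card_sum, Fintype.card_fin]
      omega
    · rintro ((i | i) | i) hi (j | j) hj <;> simp_all [Finset.piecewise]
  · refine det_submatrix_eq_zero_of_zero_block _ (s := (Finset.univ.map .inl).disjSum s)
      (t := Finset.univ.disjSum (∅ : Finset (κ ⊕ Fin q))) ?_ ?_
    · simp only [Finset.card_disjSum, Finset.card_empty, Finset.card_univ, Finset.card_map,
        Fintype.card_sum, Fintype.card_fin]
      omega
    · rintro ((i | i) | i) hi (j | j) hj <;> simp_all [Finset.piecewise]

theorem blockDet_piecewise_shuffle (s : {s : Finset (Fin (p + q)) // s.card = p}) :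
    blockDet P Q (s.1.piecewise (fromCols B 0).row (fromCols 0 C).row) =
      Equiv.Perm.sign (shufflePerm s) •
        ((fromRows P (B.submatrix (shufflePerm s ∘ Fin.castAdd q) id)).det *
          (fromRows Q (C.submatrix (shufflePerm s ∘ Fin.natAdd p) id)).det) := by
  set w := s.1.piecewise (fromCols B 0).row (fromCols 0 C).row
  have hblocks : (fromRows (fromBlocks P 0 0 Q) (of (w ∘ shufflePerm s))).submatrix
      (blockRowEquiv ι κ p q) id =
      fromBlocks (fromRows P (B.submatrix (shufflePerm s ∘ Fin.castAdd q) id)) 0 0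
        (fromRows Q (C.submatrix (shufflePerm s ∘ Fin.natAdd p) id)) := by
    have hmem (i : Fin p) : s.1.orderEmbOfFin s.2 i ∈ s.1 := Finset.orderEmbOfFin_mem ..
    have hnotMem (j : Fin q) : s.1ᶜ.orderEmbOfFin (card_compl_of_card_eq s.2) j ∉ s.1 :=
      Finset.mem_compl.1 (Finset.orderEmbOfFin_mem ..)
    ext ((i | i) | (i | i)) (j | j) <;>
      simp [w, blockRowEquiv, shufflePerm_castAdd, shufflePerm_natAdd, Finset.piecewise,
        hmem, hnotMem]
  rw [← det_fromBlocks_zero₂₁, ← hblocks, ← blockDet_apply]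
  have hperm := (blockDet P Q).map_perm w (shufflePerm s)
  rw [← inv_smul_eq_iff, Int.units_inv_eq_self] at hperm
  exact hperm.symm

/-- Laplace expansion along the first group of columns. -/
theorem blockDet_fromCols :
    blockDet P Q (fromCols B C).row = ∑ s : {s : Finset (Fin (p + q)) // s.card = p},
      Equiv.Perm.sign (shufflePerm s) •
        ((fromRows P (B.submatrix (shufflePerm s ∘ Fin.castAdd q) id)).det *
          (fromRows Q (C.submatrix (shufflePerm s ∘ Fin.natAdd p) id)).det) := by
  have hsplit : (fromCols B C).row = (fromCols B 0).row + (fromCols 0 C).row := by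
    ext i (j | j) <;> simp
  rw [hsplit]
  refine ((blockDet P Q).toMultilinearMap.map_add_univ _ _).trans ?_
  simp only [← blockDet_piecewise_shuffle]
  rw [← Finset.sum_subtype (Finset.univ.filter fun s : Finset (Fin (p + q)) => s.card = p)
    (by simp) fun s => blockDet P Q (s.piecewise (fromCols B 0).row (fromCols 0 C).row)]
  refine (Finset.sum_subset (Finset.filter_subset _ _) fun s _ hs => ?_).symm
  exact blockDet_piecewise_eq_zero P Q B C (by simpa using hs)

theorem mul_one_submatrix_id {μ ν o α : Type*} [Fintype ν] [DecidableEq ν] [NonAssocSemiring α]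
    (M : Matrix μ ν α) (f : o → ν) : M * (1 : Matrix ν ν α).submatrix id f = M.submatrix id f :=
  mul_submatrix_one (Equiv.refl ν) f M

theorem blockDet_eq_zero_of_card_lt {ν : Type*} [Fintype ν] (P : Matrix ι ν R)
    (W : Matrix (Fin (p + q)) ν R) (b : ι ⊕ Fin p → ν) (c : ι ⊕ Fin q → ν)
    (h : Fintype.card ν < Fintype.card ι + (p + q)) :
    blockDet (P.submatrix id b) (P.submatrix id c)
      (fromCols (W.submatrix id b) (W.submatrix id c)).row = 0 := by
  classical
  -- The upper rows of `U * V` are `(P_b, P_c) - (0, P_c)` and `(0, P_c)`.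
  let U : Matrix ((ι ⊕ ι) ⊕ Fin (p + q)) (ν ⊕ ι) R :=
    fromRows (fromBlocks P (-1) 0 1) (fromCols W 0)
  let V : Matrix (ν ⊕ ι) ((ι ⊕ Fin p) ⊕ (ι ⊕ Fin q)) R :=
    fromBlocks ((1 : Matrix ν ν R).submatrix id b) ((1 : Matrix ν ν R).submatrix id c)
      0 (P.submatrix id c)
  have hfactor : fromRows (fromBlocks (P.submatrix id b) 0 0 (P.submatrix id c))
        (fromCols (W.submatrix id b) (W.submatrix id c)) = U * V := by
    simp [U, V, fromRows_mul, fromBlocks_multiply, fromCols_mul_fromBlocks, mul_one_submatrix_id]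
  have hcard : Fintype.card (ν ⊕ ι) < Fintype.card ((ι ⊕ Fin p) ⊕ (ι ⊕ Fin q)) := by
    simp only [Fintype.card_sum, Fintype.card_fin]
    omega
  rw [blockDet_apply]
  change det (submatrix (fromRows _ (fromCols _ _)) _ _) = 0
  rw [hfactor, ← submatrix_mul_equiv U V (blockRowEquiv ι ι p q) (Equiv.refl _) id]
  exact det_mul_eq_zero_of_card_lt hcard _ _

theorem sum_shuffle_det_mul_det_eq_zero {ν : Type*} [Fintype ν] (P : Matrix ι ν R)
    (W : Matrix (Fin (p + q)) ν R) (b : ι ⊕ Fin p → ν) (c : ι ⊕ Fin q → ν)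
    (h : Fintype.card ν < Fintype.card ι + (p + q)) :
    ∑ s : {s : Finset (Fin (p + q)) // s.card = p}, Equiv.Perm.sign (shufflePerm s) •
      (((fromRows P (W.submatrix (shufflePerm s ∘ Fin.castAdd q) id)).submatrix id b).det *
        ((fromRows P (W.submatrix (shufflePerm s ∘ Fin.natAdd p) id)).submatrix id c).det) = 0 := by
  rw [← blockDet_eq_zero_of_card_lt P W b c h, blockDet_fromCols]
  refine Finset.sum_congr rfl fun s _ => ?_
  congr 3 <;> ext (i | i) j <;> rfl

end BlockDeterminants

section Lists

open Matrix

variable {R : Type*} [CommRing R] {p q : ℕ}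

theorem sign_eq_neg_one_pow_card_inversions {N : ℕ} (σ : Equiv.Perm (Fin N)) :
    Equiv.Perm.sign σ =
      (-1) ^ (Finset.univ.filter fun x : Fin N × Fin N => x.1 < x.2 ∧ σ x.2 < σ x.1).card := by
  rw [Equiv.Perm.sign_eq_prod_prod_Iio, ← Finset.prod_finset_product_right'
    (Finset.univ.filter fun x : Fin N × Fin N => x.1 < x.2) _ _ (by simp), Finset.prod_ite,
    Finset.prod_const_one, one_mul, Finset.prod_const, Finset.filter_filter]
  congr 2
  refine Finset.filter_congr fun x _ => and_congr_right fun hx => ?_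
  exact not_lt.trans (σ.injective.ne hx.ne').le_iff_lt

theorem invCount_ofFn {N : ℕ} (f : Fin N → ℕ) :
    invCount (List.ofFn f) =
      (Finset.univ.filter fun x : Fin N × Fin N => x.1 < x.2 ∧ f x.2 < f x.1).card := by
  refine Finset.card_equiv ((finCongr List.length_ofFn).prodCongr (finCongr List.length_ofFn)) ?_
  rintro ⟨i, j⟩
  simp only [List.get_eq_getElem, List.getElem_ofFn, Finset.mem_filter, Finset.mem_univ, true_and,
    Equiv.prodCongr_apply, Prod.map_apply, finCongr_apply, Fin.cast_lt_cast]
  rfl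

theorem neg_one_pow_invCount_ofFn_comp {N : ℕ} {e : Fin N → ℕ} (he : StrictMono e)
    (σ : Equiv.Perm (Fin N)) :
    (-1 : R) ^ invCount (List.ofFn (e ∘ σ)) = ((Equiv.Perm.sign σ : ℤ) : R) := by
  simp [invCount_ofFn, sign_eq_neg_one_pow_card_inversions, he.lt_iff_lt]

theorem mem_sortL {A : Finset ℕ} {x : ℕ} : x ∈ sortL A ↔ x ∈ A :=
  Finset.mem_sort _

theorem length_sortL (A : Finset ℕ) : (sortL A).length = A.card :=
  Finset.length_sort _

theorem sortL_map {α : Type*} [LinearOrder α] (e : α ↪o ℕ) {s : Finset α} {N : ℕ}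
    (hs : s.card = N) :
    sortL (s.map e.toEmbedding) = List.ofFn (e ∘ s.orderEmbOfFin hs) := by
  rw [sortL, ← (e.strictMono.strictMonoOn _).map_finsetSort,
    ← s.listMap_orderEmbOfFin_finRange hs, List.map_map, List.ofFn_eq_map]
  rfl

theorem sortL_map_shuffle (e : Fin (p + q) ↪o ℕ)
    (s : {s : Finset (Fin (p + q)) // s.card = p}) :
    sortL (s.1.map e.toEmbedding) = List.ofFn (e ∘ shufflePerm s ∘ Fin.castAdd q) := by
  rw [sortL_map e s.2]
  congr 2
  exact funext fun i => (shufflePerm_castAdd s i).symm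

theorem sortL_map_sdiff_shuffle (e : Fin (p + q) ↪o ℕ)
    (s : {s : Finset (Fin (p + q)) // s.card = p}) :
    sortL (Finset.univ.map e.toEmbedding \ s.1.map e.toEmbedding) =
      List.ofFn (e ∘ shufflePerm s ∘ Fin.natAdd p) := by
  rw [← Finset.map_sdiff, ← Finset.compl_eq_univ_sdiff, sortL_map e (card_compl_of_card_eq s.2)]
  congr 2
  exact funext fun j => (shufflePerm_natAdd s j).symm

theorem ofFn_castAdd_append_ofFn_natAdd {α : Type*} (f : Fin (p + q) → α) :
    List.ofFn (f ∘ Fin.castAdd q) ++ List.ofFn (f ∘ Fin.natAdd p) = List.ofFn f := by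
  rw [← List.ofFn_fin_append]
  exact congrArg List.ofFn Fin.append_castAdd_natAdd

/-- The determinant `[rows | cols]` of the submatrix of `Y` with the listed rows and columns; a
missing column index is read as `0`. -/
def listDet (Y : Matrix ℕ ℕ R) (rows cols : List ℕ) : R :=
  Matrix.det (of fun i j : Fin rows.length => Y (rows.get i) (cols.getD j 0))

theorem listMinor_eq_listDet {k : Type*} [CommRing k] {m n : ℕ} (hm : 0 < m) (hn : 0 < n) :
    listMinor k m n = listDet (of fun i j =>
      MvPolynomial.X (⟨(i - 1) % m, Nat.mod_lt _ hm⟩, ⟨(j - 1) % n, Nat.mod_lt _ hn⟩)) := by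
  ext1 rows
  ext1 cols
  exact dif_pos ⟨hm, hn⟩

theorem listDet_transpose (Y : Matrix ℕ ℕ R) {rows cols : List ℕ}
    (h : rows.length = cols.length) : listDet Yᵀ rows cols = listDet Y cols rows := by
  rw [listDet, ← det_transpose, ← det_submatrix_equiv_self (finCongr h).symm, listDet]
  congr 1
  ext i j
  simp [h]

theorem listDet_append_ofFn {ν : Type*} (Y : Matrix ℕ ℕ R) (r : List ℕ) (f : Fin p → ℕ)
    (x : ν → ℕ) {c : List ν} (hc : c.length = r.length + p) :
    listDet Y (r ++ List.ofFn f) (c.map x) =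
      ((fromRows (Y.submatrix r.get x) (Y.submatrix f x)).submatrix id
        (c.get ∘ Fin.cast hc.symm ∘ finSumFinEquiv)).det := by
  have hlen : (r ++ List.ofFn f).length = r.length + p := by simp
  rw [listDet, ← det_submatrix_equiv_self (finSumFinEquiv.trans (finCongr hlen).symm)]
  congr 1
  ext (i | i) j <;> simp [hc]

theorem sum_powersetCard_listDet_mul_listDet_eq_zero (Y : Matrix ℕ ℕ R) {r c c' : List ℕ}
    {S T : Finset ℕ} (hS : S.card = p + q) (hc : c.length = r.length + p)
    (hc' : c'.length = r.length + q) (hcT : ∀ x ∈ c, x ∈ T) (hcT' : ∀ x ∈ c', x ∈ T)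
    (hT : T.card < r.length + (p + q)) :
    ∑ I ∈ S.powersetCard p, (-1) ^ invCount (sortL I ++ sortL (S \ I)) *
      (listDet Y (r ++ sortL I) c * listDet Y (r ++ sortL (S \ I)) c') = 0 := by
  lift c to List T using hcT
  lift c' to List T using hcT'
  rw [List.length_map] at hc hc'
  let e := S.orderEmbOfFin hS
  have hshuffle := sum_shuffle_det_mul_det_eq_zero (Y.submatrix r.get ((↑) : T → ℕ))
    (Y.submatrix e ((↑) : T → ℕ)) (c.get ∘ Fin.cast hc.symm ∘ finSumFinEquiv)
    (c'.get ∘ Fin.cast hc'.symm ∘ finSumFinEquiv) (by simpa using hT)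
  rw [← hshuffle, ← S.map_orderEmbOfFin_univ hS, Finset.powersetCard_map, Finset.sum_map,
    Finset.sum_subtype (p := fun s : Finset (Fin (p + q)) => s.card = p) _
      fun s => by simp [Finset.mem_powersetCard]]
  refine Finset.sum_congr rfl fun s _ => ?_
  simp only [RelEmbedding.coe_toEmbedding, Finset.mapEmbedding_apply]
  rw [sortL_map_shuffle e, sortL_map_sdiff_shuffle e, ← Function.comp_assoc, ← Function.comp_assoc,
    ofFn_castAdd_append_ofFn_natAdd, neg_one_pow_invCount_ofFn_comp e.strictMono,
    listDet_append_ofFn _ _ _ _ hc, listDet_append_ofFn _ _ _ _ hc', Units.smul_def, zsmul_eq_mul]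
  rfl

end Lists

section QuadraticRelations

variable {R : Type*} [CommRing R]

theorem length_sortL_Icc_append {t u : ℕ} (hu : u ≤ t) {I : Finset ℕ} (hI : I.card = u) :
    (sortL (Finset.Icc 1 (t - u)) ++ sortL I).length = t := by
  rw [List.length_append, length_sortL, length_sortL, hI, Nat.card_Icc]
  omega

theorem mem_Icc_of_mem_sortL_Icc_append {t u : ℕ} {I : Finset ℕ}
    (hI : I ⊆ Finset.Icc (t - u + 1) (t + u)) :
    ∀ x ∈ sortL (Finset.Icc 1 (t - u)) ++ sortL I, x ∈ Finset.Icc 1 (t + u) := by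
  simp only [List.mem_append, mem_sortL, Finset.mem_Icc]
  rintro x (hx | hx)
  · omega
  · have := Finset.mem_Icc.1 (hI hx)
    omega

theorem card_Icc_sdiff_of_mem_powersetCard {t u : ℕ} (hu : u ≤ t) {I : Finset ℕ}
    (hI : I ∈ (Finset.Icc (t - u + 1) (t + u)).powersetCard u) :
    (Finset.Icc (t - u + 1) (t + u) \ I).card = u := by
  rw [Finset.mem_powersetCard] at hI
  rw [Finset.card_sdiff_of_subset hI.1, hI.2, Nat.card_Icc]
  omega

theorem sum_rows_listDet_mul_listDet_eq_zero (Y : Matrix ℕ ℕ R) {t u v : ℕ} (hu : u ≤ t)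
    (hv : v ≤ t) (huv : v < u) {H : Finset ℕ}
    (hH : H ∈ (Finset.Icc (t - v + 1) (t + v)).powersetCard v) :
    ∑ I ∈ (Finset.Icc (t - u + 1) (t + u)).powersetCard u,
      (-1) ^ invCount (sortL I ++ sortL (Finset.Icc (t - u + 1) (t + u) \ I)) *
        (listDet Y (sortL (Finset.Icc 1 (t - u)) ++ sortL I)
            (sortL (Finset.Icc 1 (t - v)) ++ sortL H) *
          listDet Y
            (sortL (Finset.Icc 1 (t - u)) ++ sortL (Finset.Icc (t - u + 1) (t + u) \ I))
            (sortL (Finset.Icc 1 (t - v)) ++ sortL (Finset.Icc (t - v + 1) (t + v) \ H))) = 0 := by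
  have hfixed : (sortL (Finset.Icc 1 (t - u))).length = t - u := by simp [length_sortL]
  obtain ⟨hHsub, hHcard⟩ := Finset.mem_powersetCard.1 hH
  have hKcard := card_Icc_sdiff_of_mem_powersetCard hv hH
  refine sum_powersetCard_listDet_mul_listDet_eq_zero Y (q := u) (T := Finset.Icc 1 (t + v))
    ?_ ?_ ?_ (mem_Icc_of_mem_sortL_Icc_append hHsub)
    (mem_Icc_of_mem_sortL_Icc_append Finset.sdiff_subset) ?_
  · rw [Nat.card_Icc]
    omega
  · rw [length_sortL_Icc_append hv hHcard]
    omega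
  · rw [length_sortL_Icc_append hv hKcard]
    omega
  · rw [Nat.card_Icc]
    omega

theorem quadratic_relations_general (Y : Matrix ℕ ℕ R) {t u v : ℕ} (hu : u ≤ t) (hv : v ≤ t)
    (huv : u ≠ v) :
    ∑ I ∈ (Finset.Icc (t - u + 1) (t + u)).powersetCard u,
      ∑ H ∈ (Finset.Icc (t - v + 1) (t + v)).powersetCard v,
        (-1) ^ invCount (sortL I ++ sortL (Finset.Icc (t - u + 1) (t + u) \ I)) *
          (-1) ^ invCount (sortL H ++ sortL (Finset.Icc (t - v + 1) (t + v) \ H)) *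
          listDet Y (sortL (Finset.Icc 1 (t - u)) ++ sortL I)
            (sortL (Finset.Icc 1 (t - v)) ++ sortL H) *
          listDet Y
            (sortL (Finset.Icc 1 (t - u)) ++ sortL (Finset.Icc (t - u + 1) (t + u) \ I))
            (sortL (Finset.Icc 1 (t - v)) ++ sortL (Finset.Icc (t - v + 1) (t + v) \ H)) = 0 := by
  wlog hlt : v < u generalizing Y u v
  · rw [Finset.sum_comm, ← this Y.transpose hv hu huv.symm ((not_lt.1 hlt).lt_of_ne huv)]
    refine Finset.sum_congr rfl fun H hH => Finset.sum_congr rfl fun I hI => ?_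
    have hHcard := (Finset.mem_powersetCard.1 hH).2
    have hIcard := (Finset.mem_powersetCard.1 hI).2
    have hKcard := card_Icc_sdiff_of_mem_powersetCard hv hH
    have hJcard := card_Icc_sdiff_of_mem_powersetCard hu hI
    rw [listDet_transpose, listDet_transpose, mul_comm ((-1) ^ _)]
    · rw [length_sortL_Icc_append hv hKcard, length_sortL_Icc_append hu hJcard]
    · rw [length_sortL_Icc_append hv hHcard, length_sortL_Icc_append hu hIcard]
  · rw [Finset.sum_comm]
    refine Finset.sum_eq_zero fun H hH => ?_
    rw [← mul_zero ((-1) ^ invCount (sortL H ++ sortL (Finset.Icc (t - v + 1) (t + v) \ H))),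
      ← sum_rows_listDet_mul_listDet_eq_zero Y hu hv hlt hH, Finset.mul_sum]
    exact Finset.sum_congr rfl fun I _ => by ring

end QuadraticRelations

/-- The quadratic relations `f_{u,v}` among the `t`-minors of the generic `m × n` matrix:
for `u ≠ v` in `{0,…,t}` with `u + v` even, the sum over all ordered pairs `(I, J)` of
disjoint `u`-element sets with `I ∪ J = {t−u+1,…,t+u}` (here `J = {t−u+1,…,t+u} \ I`) and
all ordered pairs `(H, K)` of disjoint `v`-element sets with `H ∪ K = {t−v+1,…,t+v}` of
`(−1)^{I,J} (−1)^{H,K} [{1,…,t−u},I | {1,…,t−v},H] · [{1,…,t−u},J | {1,…,t−v},K]`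
vanishes. -/
theorem quadratic_relations (k : Type*) [Field k] [CharZero k] (t m n u v : ℕ)
    (ht : 1 ≤ t) (htm : t ≤ m) (hmn : m ≤ n)
    (hu : u ≤ t) (hv : v ≤ t) (huv : u ≠ v) (hpar : Even (u + v))
    (hmu : t + u ≤ m) (hnv : t + v ≤ n) :
    ∑ I ∈ (Finset.Icc (t - u + 1) (t + u)).powersetCard u,
      ∑ H ∈ (Finset.Icc (t - v + 1) (t + v)).powersetCard v,
        (-1 : MvPolynomial (Fin m × Fin n) k) ^
            invCount (sortL I ++ sortL (Finset.Icc (t - u + 1) (t + u) \ I)) *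
          (-1 : MvPolynomial (Fin m × Fin n) k) ^
            invCount (sortL H ++ sortL (Finset.Icc (t - v + 1) (t + v) \ H)) *
          listMinor k m n (sortL (Finset.Icc 1 (t - u)) ++ sortL I)
            (sortL (Finset.Icc 1 (t - v)) ++ sortL H) *
          listMinor k m n
            (sortL (Finset.Icc 1 (t - u)) ++ sortL (Finset.Icc (t - u + 1) (t + u) \ I))
            (sortL (Finset.Icc 1 (t - v)) ++ sortL (Finset.Icc (t - v + 1) (t + v) \ H))
      = 0 := by
  have hm : 0 < m := by omega
  have hn : 0 < n := by omega
  simpa only [listMinor_eq_listDet hm hn] using quadratic_relations_general _ hu hv huv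
end

section
/- Let 1 ≤ m ≤ n and let X = {1,…,m} × {1,…,n} be partially ordered by: (i,j) ≤ (h,k) if and only if (i,j) = (h,k), or i < h and j < k. Suppose X = X₁ ∪ … ∪ X_h where each X_i is a chain (any two of its elements are comparable), and set N = |X₁| + … + |X_h|. Then h ≥ N/m + m − 1; equivalently, m·h ≥ N + m(m−1). -/
/-!
Fix a row `r`. For every other row `i`, one of the chains through row `i` misses row `r`: a chain
through a minimal cell of row `i` stays in rows `≥ i`, and a chain through a maximal cell of row `i`
stays in rows `≤ i`, so take the former if `r < i` and the latter otherwise. Distinct rows `i` give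
distinct chains, so at least `m - 1` of the `h` chains miss row `r`. A chain meets each row at most
once, so summing over `r` the number of chains meeting row `r` gives `N ≤ m (h - (m - 1))`.
-/

open Finset

section StrongProductOrder

variable {α β ι : Type*}

/-- The strict part of the order on `α × β` whose chains are studied: both coordinates increase
strictly. Being a chain for a partial order is the same as being a chain, in the sense of `IsChain`,
for its strict part. -/
def ProdStrongLT [LT α] [LT β] (p q : α × β) : Prop :=
  p.1 < q.1 ∧ p.2 < q.2

theorem injOn_fst_of_isChain [Preorder α] [LT β] {s : Set (α × β)}
    (hs : IsChain ProdStrongLT s) : s.InjOn Prod.fst := by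
  intro p hp q hq hpq
  by_contra hne
  rcases hs hp hq hne with h | h
  · exact h.1.ne hpq
  · exact h.1.ne' hpq

theorem sum_card_chains_eq_sum_card_chains_meeting_row [Preorder α] [LT β]
    [Fintype α] [Fintype ι] [DecidableEq α] {C : ι → Finset (α × β)}
    (hchain : ∀ c, IsChain ProdStrongLT (C c : Set (α × β))) :
    ∑ c, #(C c) = ∑ r, #{c | r ∈ (C c).image Prod.fst} := by
  calc ∑ c, #(C c) = ∑ c, #((C c).image Prod.fst) :=
        sum_congr rfl fun c _ => (card_image_of_injOn (injOn_fst_of_isChain (hchain c))).symm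
    _ = ∑ c, #{r | r ∈ (C c).image Prod.fst} := by simp only [filter_univ_mem]
    _ = ∑ r, #{c | r ∈ (C c).image Prod.fst} :=
        sum_card_bipartiteAbove_eq_sum_card_bipartiteBelow fun c r => r ∈ (C c).image Prod.fst

variable [Preorder α] [Preorder β]

theorem fst_le_fst_of_isChain_of_isMin {s : Set (α × β)} (hs : IsChain ProdStrongLT s)
    {p q : α × β} (hp : p ∈ s) (hmin : IsMin p.2) (hq : q ∈ s) : p.1 ≤ q.1 := by
  obtain rfl | hne := eq_or_ne p q
  · exact le_rfl
  rcases hs hp hq hne with h | h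
  · exact h.1.le
  · exact absurd h.2 hmin.not_lt

theorem fst_le_fst_of_isChain_of_isMax {s : Set (α × β)} (hs : IsChain ProdStrongLT s)
    {p q : α × β} (hp : p ∈ s) (hq : q ∈ s) (hmax : IsMax q.2) : p.1 ≤ q.1 := by
  obtain rfl | hne := eq_or_ne p q
  · exact le_rfl
  rcases hs hp hq hne with h | h
  · exact h.1.le
  · exact absurd h.2 hmax.not_lt

end StrongProductOrder

section ChainFamily

variable {α β ι : Type*} [PartialOrder α] [Preorder β]

theorem exists_injective_chain_avoiding_row {C : ι → Set (α × β)}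
    (hchain : ∀ c, IsChain ProdStrongLT (C c))
    (hmin : ∀ a, ∃ c b, IsMin b ∧ (a, b) ∈ C c)
    (hmax : ∀ a, ∃ c b, IsMax b ∧ (a, b) ∈ C c) (r : α) :
    ∃ f : α → ι, Function.Injective f ∧ ∀ a ≠ r, r ∉ Prod.fst '' C (f a) := by
  classical
  choose up bot hbot hup using hmin
  choose down top htop hdown using hmax
  have le_of_mem_up {a a' : α} {b : β} (h : (a', b) ∈ C (up a)) : a ≤ a' :=
    fst_le_fst_of_isChain_of_isMin (hchain _) (hup a) (hbot a) h
  have le_of_mem_down {a a' : α} {b : β} (h : (a', b) ∈ C (down a)) : a' ≤ a :=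
    fst_le_fst_of_isChain_of_isMax (hchain _) h (hdown a) (htop a)
  have le_of_up_eq_down {a a' : α} (h : up a = down a') : a ≤ a' :=
    le_of_mem_down (h ▸ hup a)
  refine ⟨fun a => if r < a then up a else down a, ?_, ?_⟩
  · intro a a' h
    dsimp only at h
    split_ifs at h with ha ha' ha'
    · exact (le_of_mem_up (h ▸ hup a')).antisymm (le_of_mem_up (h ▸ hup a))
    · exact absurd (ha.trans_le (le_of_up_eq_down h)) ha'
    · exact absurd (ha'.trans_le (le_of_up_eq_down h.symm)) ha
    · exact (le_of_mem_down (h ▸ hdown a)).antisymm (le_of_mem_down (h ▸ hdown a'))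
  · rintro a hne ⟨⟨r, b⟩, hp, rfl⟩
    dsimp only at hp
    split_ifs at hp with ha
    · exact (le_of_mem_up hp).not_gt ha
    · exact ha ((le_of_mem_down hp).lt_of_ne hne.symm)

variable [Fintype α] [Fintype ι] [DecidableEq α]

theorem card_chains_meeting_row_add_le {C : ι → Finset (α × β)}
    (hchain : ∀ c, IsChain ProdStrongLT (C c : Set (α × β)))
    (hmin : ∀ a, ∃ c b, IsMin b ∧ (a, b) ∈ C c)
    (hmax : ∀ a, ∃ c b, IsMax b ∧ (a, b) ∈ C c) (r : α) :
    #{c | r ∈ (C c).image Prod.fst} + (Fintype.card α - 1) ≤ Fintype.card ι := by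
  obtain ⟨f, hinj, havoid⟩ := exists_injective_chain_avoiding_row hchain hmin hmax r
  have hmissing : Fintype.card α - 1 ≤ #{c | r ∉ (C c).image Prod.fst} := by
    rw [← card_univ, ← card_erase_of_mem (mem_univ r)]
    refine card_le_card_of_injOn f (fun a ha => ?_) hinj.injOn
    simpa using havoid a (ne_of_mem_erase ha)
  calc #{c | r ∈ (C c).image Prod.fst} + (Fintype.card α - 1)
      ≤ #{c | r ∈ (C c).image Prod.fst} + #{c | r ∉ (C c).image Prod.fst} := by gcongr
    _ = Fintype.card ι := card_filter_add_card_filter_not _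

end ChainFamily

theorem chain_cover_bound_general {α β ι : Type*} [PartialOrder α] [Preorder β]
    [Fintype α] [Fintype ι] {C : ι → Finset (α × β)}
    (hchain : ∀ c, IsChain ProdStrongLT (C c : Set (α × β)))
    (hmin : ∀ a, ∃ c b, IsMin b ∧ (a, b) ∈ C c)
    (hmax : ∀ a, ∃ c b, IsMax b ∧ (a, b) ∈ C c) :
    ∑ c, #(C c) + Fintype.card α * (Fintype.card α - 1) ≤ Fintype.card α * Fintype.card ι := by
  classical
  calc ∑ c, #(C c) + Fintype.card α * (Fintype.card α - 1)
      = ∑ r, (#{c | r ∈ (C c).image Prod.fst} + (Fintype.card α - 1)) := by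
        rw [sum_card_chains_eq_sum_card_chains_meeting_row hchain, sum_add_distrib, sum_const,
          card_univ, smul_eq_mul]
    _ ≤ ∑ _r : α, Fintype.card ι :=
        sum_le_sum fun r _ => card_chains_meeting_row_add_le hchain hmin hmax r
    _ = Fintype.card α * Fintype.card ι := by rw [sum_const, card_univ, smul_eq_mul]

/-- Chain-covering lemma: partially order `X = {1,…,m} × {1,…,n}` by
`(i,j) ≤ (h,k) ⇔ (i,j) = (h,k) or (i < h and j < k)`. If `X` is covered by chains
`X₁, …, X_h` and `N = |X₁| + … + |X_h|`, then `m·h ≥ N + m(m−1)`,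
i.e. `h ≥ N/m + m − 1`. -/
theorem chain_cover_bound (m n h : ℕ) (hm : 1 ≤ m) (hmn : m ≤ n)
    (Xs : Fin h → Finset (Fin m × Fin n))
    (hchain : ∀ (i : Fin h), ∀ p ∈ Xs i, ∀ q ∈ Xs i,
      p = q ∨ (p.1 < q.1 ∧ p.2 < q.2) ∨ (q.1 < p.1 ∧ q.2 < p.2))
    (hcover : ∀ p : Fin m × Fin n, ∃ i, p ∈ Xs i) :
    (∑ i, (Xs i).card) + m * (m - 1) ≤ m * h := by
  have : NeZero n := ⟨by lia⟩
  simpa only [Fintype.card_fin] using chain_cover_bound_general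
    (fun i p hp q hq hne => (hchain i p hp q hq).resolve_left hne)
    (fun a => (hcover (a, ⊥)).imp fun _ h => ⟨⊥, isMin_bot, h⟩)
    (fun a => (hcover (a, ⊤)).imp fun _ h => ⟨⊤, isMax_top, h⟩)
end

section
/- Let t ≥ 1, d ≥ 2, and let λ be a (t,d)-admissible partition with exactly k nonzero parts λ₁ ≥ … ≥ λ_k ≥ 1. Then λ has exactly one t-predecessor if and only if either λ₁ = λ₂ = … = λ_k (λ is a rectangle), or k = d and there is an index i with 1 ≤ i < d such that λ₁ = … = λ_i > λ_{i+1} = … = λ_d (λ is a fat hook with d rows). -/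
/-- A `(t,d)`-admissible partition, encoded as a weakly decreasing function `ℕ → ℕ`
(0-indexed parts, padded with zeros): it has at most `d` nonzero parts and its parts sum
to `t·d`. -/
def IsAdmissible (t d : ℕ) (lam : ℕ → ℕ) : Prop :=
  (∀ ⦃i j : ℕ⦄, i ≤ j → lam j ≤ lam i) ∧ (∀ i, d ≤ i → lam i = 0) ∧
    (∑ i ∈ Finset.range d, lam i) = t * d

/-- `α` is a `t`-predecessor of the `(t,d)`-admissible partition `lam`:
`α` is `(t,d−1)`-admissible, `α₁ ≤ λ₁ ≤ α₁ + t`, and `α_i ≤ λ_i ≤ α_{i−1}` for `i ≥ 2`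
(in 0-indexed form: `α i ≤ lam i ≤ α (i-1)` for all `i ≥ 1`). -/
def IsPred (t d : ℕ) (α lam : ℕ → ℕ) : Prop :=
  IsAdmissible t (d - 1) α ∧ α 0 ≤ lam 0 ∧ lam 0 ≤ α 0 + t ∧
    ∀ i, 1 ≤ i → α i ≤ lam i ∧ lam i ≤ α (i - 1)

/-!
The predecessors of `lam` are the integer points of a box `Set.Icc L U` lying on the hyperplane
on which the first `d - 1` coordinates sum to `t * (d - 1)`. The bounds `L i` and `U i` differ
exactly at the *descents* of `lam`, the rows `i < d - 1` with `lam (i + 1) < lam i`. The average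
part of `lam` being `t`, the hyperplane always meets the box, and it separates `L` strictly from `U`
as soon as there are two descents; a unit can then be moved from one coordinate of a predecessor to
another. Hence the predecessor is unique if and only if there is at most one descent.
-/

section Box

variable {ι : Type*} {s : Finset ι}

theorem eq_of_mem_Icc_of_sum_eq {M : Type*} [AddCancelCommMonoid M] [PartialOrder M]
    {L U f g : ι → M} (hs : ∀ i ∉ s, L i = U i) (hfree : {i | L i < U i}.Subsingleton)
    (hf : f ∈ Set.Icc L U) (hg : g ∈ Set.Icc L U) (hsum : ∑ i ∈ s, f i = ∑ i ∈ s, g i) :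
    f = g := by
  classical
  have eq_or_lt (i : ι) : f i = g i ∨ L i < U i := by
    rcases ((hf.1 i).trans (hf.2 i)).eq_or_lt with h | h
    · left
      rw [(hf.2 i).antisymm (h ▸ hf.1 i), (hg.2 i).antisymm (h ▸ hg.1 i)]
    · exact .inr h
  by_contra hne
  obtain ⟨m, hm⟩ := Function.ne_iff.1 hne
  have hmfree : L m < U m := (eq_or_lt m).resolve_left hm
  have hms : m ∈ s := not_imp_comm.1 (hs m) hmfree.ne
  have hrest : ∑ i ∈ s.erase m, f i = ∑ i ∈ s.erase m, g i :=
    Finset.sum_congr rfl fun i hi =>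
      (eq_or_lt i).resolve_right fun h => Finset.ne_of_mem_erase hi (hfree h hmfree)
  rw [← Finset.add_sum_erase s f hms, ← Finset.add_sum_erase s g hms, hrest] at hsum
  exact hm (add_right_cancel hsum)

theorem sum_add_single {M : Type*} [AddCommMonoid M] [DecidableEq ι] {i : ι} (hi : i ∈ s)
    (f : ι → M) (a : M) :
    ∑ k ∈ s, (f + Pi.single i a : ι → M) k = ∑ k ∈ s, f k + a := by
  simp [Finset.sum_add_distrib, hi]

variable {L U f : ι → ℕ} {S : ℕ}

theorem exists_mem_Icc_sum_eq (hLU : L ≤ U) (hL : ∑ i ∈ s, L i ≤ S) (hU : S ≤ ∑ i ∈ s, U i) :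
    ∃ f ∈ Set.Icc L U, ∑ i ∈ s, f i = S := by
  classical
  induction S, hL using Nat.le_induction with
  | base => exact ⟨L, Set.left_mem_Icc.2 hLU, rfl⟩
  | succ S _ ih =>
    obtain ⟨f, hf, rfl⟩ := ih (by lia)
    obtain ⟨i, hi, hlt⟩ := Finset.exists_lt_of_sum_lt (Nat.lt_of_succ_le hU)
    refine ⟨f + Pi.single i 1, ⟨hf.1.trans le_self_add, fun k => ?_⟩, sum_add_single hi f 1⟩
    have := hf.2 k
    grind [Pi.add_apply]

theorem existsUnique_mem_Icc_sum_eq (hLU : L ≤ U) (hs : ∀ i ∉ s, L i = U i)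
    (hL : ∑ i ∈ s, L i ≤ S) (hU : S ≤ ∑ i ∈ s, U i) (hfree : {i | L i < U i}.Subsingleton) :
    ∃! f, f ∈ Set.Icc L U ∧ ∑ i ∈ s, f i = S := by
  obtain ⟨f, hf, hfS⟩ := exists_mem_Icc_sum_eq hLU hL hU
  exact ⟨f, ⟨hf, hfS⟩, fun g hg => eq_of_mem_Icc_of_sum_eq hs hfree hg.1 hf (hg.2.trans hfS.symm)⟩

theorem exists_ne_mem_Icc_sum_eq {i j : ι} (hf : f ∈ Set.Icc L U) (hi : i ∈ s) (hj : j ∈ s)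
    (hij : i ≠ j) (hLi : L i < f i) (hUj : f j < U j) :
    ∃ g ≠ f, g ∈ Set.Icc L U ∧ ∑ k ∈ s, g k = ∑ k ∈ s, f k := by
  classical
  obtain ⟨r, rfl⟩ : ∃ r : ι → ℕ, f = r + Pi.single i 1 :=
    ⟨f - Pi.single i 1, funext fun k => by grind [Pi.add_apply, Pi.sub_apply]⟩
  refine ⟨r + Pi.single j 1, fun h => ?_, ⟨fun k => ?_, fun k => ?_⟩, ?_⟩
  · exact hij.symm (by simpa [Pi.single_apply] using congrFun h j)
  · have := hf.1 k
    grind [Pi.add_apply]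
  · have := hf.2 k
    grind [Pi.add_apply]
  · rw [sum_add_single hj, sum_add_single hi]

theorem subsingleton_of_existsUnique_mem_Icc_sum_eq (hs : ∀ i ∉ s, L i = U i)
    (hL : ∑ i ∈ s, L i < S) (hU : S < ∑ i ∈ s, U i)
    (h : ∃! f, f ∈ Set.Icc L U ∧ ∑ i ∈ s, f i = S) : {i | L i < U i}.Subsingleton := by
  obtain ⟨f, ⟨hf, rfl⟩, hunique⟩ := h
  have no_move {i j : ι} (hi : i ∈ s) (hj : j ∈ s) (hLi : L i < f i) (hUj : f j < U j) :
      i = j := by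
    by_contra hij
    obtain ⟨g, hgf, hg⟩ := exists_ne_mem_Icc_sum_eq hf hi hj hij hLi hUj
    exact hgf (hunique g hg)
  obtain ⟨m, hm, hLm⟩ := Finset.exists_lt_of_sum_lt hL
  obtain ⟨m', hm', hUm'⟩ := Finset.exists_lt_of_sum_lt hU
  obtain rfl : m = m' := no_move hm hm' hLm hUm'
  have eq_m {i : ι} (hi : L i < U i) : i = m := by
    have his : i ∈ s := not_imp_comm.1 (hs i) hi.ne
    rcases (hf.1 i).eq_or_lt with h | h
    · exact (no_move hm his hLm (h ▸ hi)).symm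
    · exact no_move his hm h hUm'
  exact fun i hi j hj => (eq_m hi).trans (eq_m hj).symm

end Box

section Descents

/-- The descents of the sequence `lam 0, …, lam n`, each recorded by its left position. For
`n = d - 1` they are the coordinates in which predecessors of a partition `lam` may differ. -/
def descents (n : ℕ) (lam : ℕ → ℕ) : Set ℕ :=
  {i | i < n ∧ lam (i + 1) < lam i}

/-- The sequence `lam 0, …, lam n` is a nonempty constant block followed by a (possibly empty)
constant block: the common shape of rectangles and fat hooks. -/
def IsTwoBlock (n : ℕ) (lam : ℕ → ℕ) : Prop :=
  ∃ m, (∀ i ≤ m, lam i = lam 0) ∧ ∀ i, m < i → i ≤ n → lam i = lam n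

variable {n : ℕ} {lam : ℕ → ℕ}

theorem apply_eq_of_forall_notMem_descents (hlam : Antitone lam) {a b : ℕ} (hab : a ≤ b)
    (hbn : b ≤ n) (h : ∀ i, a ≤ i → i < b → i ∉ descents n lam) : lam a = lam b := by
  have hmono : MonotoneOn lam (Set.Icc a b) :=
    monotoneOn_of_le_add_one Set.ordConnected_Icc fun i _ hi hi' =>
      not_lt.1 fun hlt => h i hi.1 hi'.2 ⟨lt_of_lt_of_le hi'.2 hbn, hlt⟩
  exact (hmono (Set.left_mem_Icc.2 hab) (Set.right_mem_Icc.2 hab) hab).antisymm (hlam hab)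

theorem descents_subsingleton_iff_isTwoBlock (hlam : Antitone lam) :
    (descents n lam).Subsingleton ↔ IsTwoBlock n lam := by
  constructor
  · intro h
    obtain ⟨m, hmn, hm⟩ : ∃ m ≤ n, descents n lam ⊆ {m} := by
      rcases h.eq_empty_or_singleton with h | ⟨m, h⟩
      · exact ⟨n, le_rfl, by simp [h]⟩
      · have hmem : m ∈ descents n lam := h ▸ rfl
        exact ⟨m, hmem.1.le, h.subset⟩
    refine ⟨m, fun i hi => ?_, fun i hi hin => ?_⟩
    · exact (apply_eq_of_forall_notMem_descents hlam (Nat.zero_le i) (hi.trans hmn)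
        fun k _ hk hkd => (hk.trans_le hi).ne (hm hkd)).symm
    · exact apply_eq_of_forall_notMem_descents hlam hin le_rfl
        fun k hk _ hkd => (hi.trans_le hk).ne' (hm hkd)
  · rintro ⟨m, hfirst, hlast⟩
    refine Set.subsingleton_of_subset_singleton (a := m) fun i ⟨hin, hlt⟩ => ?_
    by_contra hne
    rcases lt_or_gt_of_ne hne with him | hmi
    · exact hlt.ne ((hfirst (i + 1) him).trans (hfirst i him.le).symm)
    · exact hlt.ne ((hlast (i + 1) (by lia) hin).trans (hlast i hmi hin.le).symm)

theorem isTwoBlock_iff_rectangle_or_fat_hook (hlam : Antitone lam) {K : ℕ} (hKn : K ≤ n + 1)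
    (hpos : ∀ i < K, 1 ≤ lam i) (hzero : ∀ i, K ≤ i → lam i = 0) :
    IsTwoBlock n lam ↔
      ((∀ i < K, lam i = lam 0) ∨
        (K = n + 1 ∧ ∃ i, 1 ≤ i ∧ i < n + 1 ∧ (∀ j < i, lam j = lam 0) ∧
          (∀ j, i ≤ j → j < n + 1 → lam j = lam i) ∧ lam i < lam 0)) := by
  constructor
  · rintro ⟨m, hfirst, hlast⟩
    by_cases hrect : ∀ i < K, lam i = lam 0
    · exact .inl hrect
    right
    push Not at hrect
    obtain ⟨i, hiK, hi⟩ := hrect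
    have hmi : m < i := not_le.1 fun h => hi (hfirst i h)
    have hin : lam i = lam n := hlast i hmi (by lia)
    have hnK : n < K := by
      by_contra h
      have := hpos i hiK
      have := hzero n (not_lt.1 h)
      lia
    have hblock (j : ℕ) (hj : m + 1 ≤ j) (hjn : j < n + 1) : lam j = lam (m + 1) :=
      (hlast j hj (by lia)).trans (hlast (m + 1) (by lia) (by lia)).symm
    refine ⟨by lia, m + 1, by lia, by lia, fun j hj => hfirst j (by lia), hblock, ?_⟩
    rw [← hblock i hmi (by lia)]
    exact lt_of_le_of_ne (hlam (Nat.zero_le i)) hi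
  · rintro (hrect | ⟨-, i, hi, -, hfirst, hlast, -⟩)
    · refine ⟨K - 1, fun i hi => ?_, fun i hi hin => ?_⟩
      · rcases Nat.eq_zero_or_pos i with rfl | h
        · rfl
        · exact hrect i (by lia)
      · rw [hzero i (by lia), hzero n (by lia)]
    · exact ⟨i - 1, fun j hj => hfirst j (by lia), fun j hj hjn =>
        (hlast j (by lia) (by lia)).trans (hlast n (by lia) (by lia)).symm⟩

theorem drops_of_descents_nontrivial (hlam : Antitone lam) (h : (descents n lam).Nontrivial) :
    0 < lam 1 ∧ lam n < lam 0 := by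
  obtain ⟨p, ⟨-, hp⟩, q, ⟨hqn, hq⟩, hpq⟩ := h.exists_lt
  have : lam p ≤ lam 0 := hlam (Nat.zero_le p)
  have : lam q ≤ lam (p + 1) := hlam hpq
  have : lam (p + 1) ≤ lam 1 := hlam (by lia)
  have : lam n ≤ lam (p + 1) := hlam (by lia)
  lia

end Descents

namespace IsAdmissible

variable {t n : ℕ} {lam : ℕ → ℕ}

theorem antitone {d : ℕ} (h : IsAdmissible t d lam) : Antitone lam :=
  h.1

theorem le_of_forall_pos {d K : ℕ} (h : IsAdmissible t d lam) (hpos : ∀ i < K, 1 ≤ lam i) :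
    K ≤ d :=
  not_lt.1 fun hdK => Nat.ne_of_gt (hpos d hdK) (h.2.1 d le_rfl)

theorem last_le (h : IsAdmissible t (n + 1) lam) : lam n ≤ t := by
  have hsum : (n + 1) * lam n ≤ ∑ i ∈ Finset.range (n + 1), lam i := by
    simpa using Finset.card_nsmul_le_sum (Finset.range (n + 1)) lam (lam n)
      fun i hi => h.antitone (Finset.mem_range_succ_iff.1 hi)
  rw [h.2.2, mul_comm t] at hsum
  exact Nat.le_of_mul_le_mul_left hsum n.succ_pos

theorem le_first (h : IsAdmissible t (n + 1) lam) : t ≤ lam 0 := by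
  have hsum : ∑ i ∈ Finset.range (n + 1), lam i ≤ (n + 1) * lam 0 := by
    simpa using Finset.sum_le_card_nsmul (Finset.range (n + 1)) lam (lam 0)
      fun i _ => h.antitone (Nat.zero_le i)
  rw [h.2.2, mul_comm t] at hsum
  exact Nat.le_of_mul_le_mul_left hsum n.succ_pos

theorem last_lt (h : IsAdmissible t (n + 1) lam) (hlt : lam n < lam 0) : lam n < t := by
  have hsum : ∑ _i ∈ Finset.range (n + 1), lam n < ∑ i ∈ Finset.range (n + 1), lam i :=
    Finset.sum_lt_sum (fun i hi => h.antitone (Finset.mem_range_succ_iff.1 hi)) ⟨0, by simp, hlt⟩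
  rw [h.2.2, Finset.sum_const, Finset.card_range, smul_eq_mul, mul_comm t] at hsum
  exact Nat.lt_of_mul_lt_mul_left hsum

theorem lt_first (h : IsAdmissible t (n + 1) lam) (hlt : lam n < lam 0) : t < lam 0 := by
  have hsum : ∑ i ∈ Finset.range (n + 1), lam i < ∑ _i ∈ Finset.range (n + 1), lam 0 :=
    Finset.sum_lt_sum (fun i _ => h.antitone (Nat.zero_le i)) ⟨n, by simp, hlt⟩
  rw [h.2.2, Finset.sum_const, Finset.card_range, smul_eq_mul, mul_comm t] at hsum
  exact Nat.lt_of_mul_lt_mul_left hsum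

end IsAdmissible

section Predecessors

/-- The pointwise lower bound on the `t`-predecessors of `lam`. The inequality `λ₁ ≤ α₁ + t` gives
the term `lam 0 - t`, whose subtraction truncates to the vacuous bound `0`. -/
def predLower (t : ℕ) (lam : ℕ → ℕ) : ℕ → ℕ :=
  (fun i => lam (i + 1)) ⊔ Pi.single 0 (lam 0 - t)

/-- The pointwise upper bound on the predecessors of `lam`, which have at most `n` parts. -/
def predUpper (n : ℕ) (lam : ℕ → ℕ) : ℕ → ℕ :=
  fun i => if i < n then lam i else 0

variable {t n : ℕ} {lam α : ℕ → ℕ}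

theorem predLower_zero : predLower t lam 0 = max (lam 1) (lam 0 - t) := by
  simp [predLower]

theorem predLower_succ (i : ℕ) : predLower t lam (i + 1) = lam (i + 2) := by
  simp [predLower]

theorem predLower_le_iff :
    predLower t lam ≤ α ↔ (∀ i, lam (i + 1) ≤ α i) ∧ lam 0 ≤ α 0 + t := by
  have hsingle : Pi.single 0 (lam 0 - t) ≤ α ↔ lam 0 ≤ α 0 + t := by
    rw [← tsub_le_iff_right]
    refine ⟨fun h => by simpa using h 0, fun h i => ?_⟩
    cases i <;> simp [h]
  rw [predLower, sup_le_iff, hsingle, Pi.le_def]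

theorem le_predUpper_iff :
    α ≤ predUpper n lam ↔ (∀ i, α i ≤ lam i) ∧ ∀ i, n ≤ i → α i = 0 := by
  simp only [Pi.le_def, predUpper]
  grind

theorem predLower_le_predUpper (h : IsAdmissible t (n + 2) lam) :
    predLower t lam ≤ predUpper (n + 1) lam := by
  refine predLower_le_iff.2 ⟨fun i => ?_, by simp [predUpper]⟩
  unfold predUpper
  split_ifs with hi
  · exact h.antitone i.le_succ
  · exact (h.2.1 (i + 1) (by lia)).le

theorem predLower_lt_predUpper_iff (ht : 0 < t) {i : ℕ} :
    predLower t lam i < predUpper n lam i ↔ i ∈ descents n lam := by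
  cases i <;> grind [descents, predUpper, predLower_zero, predLower_succ]

theorem predLower_eq_predUpper (h : IsAdmissible t (n + 2) lam) {i : ℕ} (hi : n + 1 ≤ i) :
    predLower t lam i = predUpper (n + 1) lam i := by
  have hU : predUpper (n + 1) lam i = 0 := if_neg hi.not_gt
  exact (predLower_le_predUpper h i).antisymm (hU ▸ Nat.zero_le _)

theorem isPred_iff_mem_Icc :
    IsPred t (n + 2) α lam ↔
      α ∈ Set.Icc (predLower t lam) (predUpper (n + 1) lam) ∧
        ∑ i ∈ Finset.range (n + 1), α i = t * (n + 1) := by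
  rw [Set.mem_Icc, predLower_le_iff, le_predUpper_iff]
  constructor
  · rintro ⟨⟨-, hα, hsum⟩, hfirst, hfirst', hrest⟩
    refine ⟨⟨⟨fun i => (hrest (i + 1) i.succ_pos).2, hfirst'⟩, fun i => ?_, hα⟩, hsum⟩
    cases i with
    | zero => exact hfirst
    | succ i => exact (hrest (i + 1) i.succ_pos).1
  · rintro ⟨⟨⟨hge, hfirst⟩, hle, hα⟩, hsum⟩
    have hanti : Antitone α := antitone_nat_of_succ_le fun i => (hle (i + 1)).trans (hge i)
    refine ⟨⟨hanti, hα, hsum⟩, hle 0, hfirst, fun i hi => ⟨hle i, ?_⟩⟩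
    simpa [Nat.sub_add_cancel hi] using hge (i - 1)

theorem sum_predUpper_add (h : IsAdmissible t (n + 1) lam) :
    ∑ i ∈ Finset.range n, predUpper n lam i + lam n = t * (n + 1) := by
  rw [← h.2.2, Finset.sum_range_succ]
  congr 1
  exact Finset.sum_congr rfl fun i hi => if_pos (Finset.mem_range.1 hi)

theorem sum_predLower_add (h : IsAdmissible t (n + 2) lam) :
    ∑ i ∈ Finset.range (n + 1), predLower t lam i + min (lam 0) (lam 1 + t) = t * (n + 2) := by
  have hsum : ∑ i ∈ Finset.range n, lam (i + 2) + lam 1 + lam 0 = t * (n + 2) := by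
    rw [← h.2.2, Finset.sum_range_succ', Finset.sum_range_succ']
  simp only [Finset.sum_range_succ' _ n, predLower_zero, predLower_succ]
  lia

theorem existsUnique_isPred_iff_descents_subsingleton (ht : 0 < t)
    (h : IsAdmissible t (n + 2) lam) :
    (∃! α, IsPred t (n + 2) α lam) ↔ (descents (n + 1) lam).Subsingleton := by
  have hL := sum_predLower_add h
  have hU := sum_predUpper_add h
  have hfree : {i | predLower t lam i < predUpper (n + 1) lam i} = descents (n + 1) lam :=
    Set.ext fun _ => predLower_lt_predUpper_iff ht
  have hout (i : ℕ) (hi : i ∉ Finset.range (n + 1)) :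
      predLower t lam i = predUpper (n + 1) lam i :=
    predLower_eq_predUpper h (by simpa using hi)
  simp only [isPred_iff_mem_Icc]
  constructor
  · intro hunique
    by_contra hdesc
    obtain ⟨h1, hlt⟩ :=
      drops_of_descents_nontrivial h.antitone (Set.not_subsingleton_iff.1 hdesc)
    have hfirst := h.lt_first hlt
    have hlast := h.last_lt hlt
    have hsumL : ∑ i ∈ Finset.range (n + 1), predLower t lam i < t * (n + 1) := by lia
    have hsumU : t * (n + 1) < ∑ i ∈ Finset.range (n + 1), predUpper (n + 1) lam i := by lia
    exact hdesc (hfree ▸ subsingleton_of_existsUnique_mem_Icc_sum_eq hout hsumL hsumU hunique)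
  · intro hdesc
    have hfirst := h.le_first
    have hlast := h.last_le
    have hsumL : ∑ i ∈ Finset.range (n + 1), predLower t lam i ≤ t * (n + 1) := by lia
    have hsumU : t * (n + 1) ≤ ∑ i ∈ Finset.range (n + 1), predUpper (n + 1) lam i := by lia
    exact existsUnique_mem_Icc_sum_eq (predLower_le_predUpper h) hout hsumL hsumU (hfree ▸ hdesc)

end Predecessors

/-- A `(t,d)`-admissible partition `lam` with exactly `K` nonzero parts has exactly one
`t`-predecessor if and only if it is a rectangle (`λ₁ = … = λ_K`) or a fat hook with `d`
rows (`K = d` and `λ₁ = … = λ_i > λ_{i+1} = … = λ_d` for some `1 ≤ i < d`). -/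
theorem unique_pred_iff_rectangle_or_fat_hook (t d K : ℕ) (ht : 1 ≤ t) (hd : 2 ≤ d)
    (lam : ℕ → ℕ) (hadm : IsAdmissible t d lam)
    (hK : 1 ≤ K) (hpos : ∀ i < K, 1 ≤ lam i) (hzero : ∀ i, K ≤ i → lam i = 0) :
    (∃! α : ℕ → ℕ, IsPred t d α lam) ↔
      ((∀ i < K, lam i = lam 0) ∨
        (K = d ∧ ∃ i, 1 ≤ i ∧ i < d ∧ (∀ j < i, lam j = lam 0) ∧
          (∀ j, i ≤ j → j < d → lam j = lam i) ∧ lam i < lam 0)) := by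
  obtain ⟨n, rfl⟩ := Nat.exists_eq_add_of_le' hd
  rw [existsUnique_isPred_iff_descents_subsingleton ht hadm,
    descents_subsingleton_iff_isTwoBlock hadm.antitone]
  exact isTwoBlock_iff_rectangle_or_fat_hook hadm.antitone (hadm.le_of_forall_pos hpos) hpos hzero
end

section
/- Let t ≥ 1 and let λ = (λ₁, λ₂, λ₃) be a (t,3)-admissible partition (so λ₁ ≥ λ₂ ≥ λ₃ ≥ 0 and λ₁ + λ₂ + λ₃ = 3t, with at most 3 nonzero parts). Then the number of t-predecessors of λ is exactly min{λ₁ − λ₂, λ₂ − λ₃} + 1. -/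
section

variable {t d : ℕ} {α lam : ℕ → ℕ}

theorem apply_zero_le_apply_zero_add (hα : ∑ i ∈ Finset.range d, α i = t * d)
    (hlam : ∑ i ∈ Finset.range (d + 1), lam i = t * (d + 1))
    (h : ∀ i < d, α (i + 1) ≤ lam (i + 1)) : lam 0 ≤ α 0 + t := by
  have hle : t * d ≤ ∑ i ∈ Finset.range d, lam (i + 1) + α 0 := calc
    t * d = ∑ i ∈ Finset.range d, α i := hα.symm
    _ ≤ ∑ i ∈ Finset.range (d + 1), α i :=
      Finset.sum_le_sum_of_subset (Finset.range_subset_range.2 d.le_succ)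
    _ = ∑ i ∈ Finset.range d, α (i + 1) + α 0 := Finset.sum_range_succ' α d
    _ ≤ ∑ i ∈ Finset.range d, lam (i + 1) + α 0 := by
      gcongr with i hi
      exact h i (Finset.mem_range.1 hi)
  rw [Finset.sum_range_succ', mul_add_one] at hlam
  omega

theorem isPred_succ_iff (hlam : ∑ i ∈ Finset.range (d + 1), lam i = t * (d + 1)) :
    IsPred t (d + 1) α lam ↔ (∀ i, α i ∈ Set.Icc (lam (i + 1)) (lam i)) ∧
      (∀ i, d ≤ i → α i = 0) ∧ ∑ i ∈ Finset.range d, α i = t * d := by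
  constructor
  · rintro ⟨⟨-, hzero, hsum⟩, hle_zero, -, hinter⟩
    refine ⟨fun i => ⟨(hinter (i + 1) i.succ_pos).2, ?_⟩, hzero, hsum⟩
    rcases i with _ | i
    · exact hle_zero
    · exact (hinter (i + 1) i.succ_pos).1
  · rintro ⟨hinter, hzero, hsum⟩
    have hanti : Antitone α := antitone_nat_of_succ_le fun i =>
      (hinter (i + 1)).2.trans (hinter i).1
    refine ⟨⟨hanti, hzero, hsum⟩, (hinter 0).2,
      apply_zero_le_apply_zero_add hsum hlam fun i _ => (hinter (i + 1)).2, fun i hi => ?_⟩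
    obtain ⟨j, rfl⟩ := Nat.exists_eq_add_of_le' hi
    exact ⟨(hinter (j + 1)).2, (hinter j).1⟩

/-- The partition `(x, y)` in the encoding of `IsAdmissible`, that is, the sequence
`x, y, 0, 0, …`; no order between `x` and `y` is imposed. -/
def pairSeq (x y : ℕ) : ℕ → ℕ
  | 0 => x
  | 1 => y
  | _ => 0

theorem eq_pairSeq (h : ∀ i, 2 ≤ i → α i = 0) : α = pairSeq (α 0) (α 1) := by
  funext i
  match i with
  | 0 => rfl
  | 1 => rfl
  | i + 2 => exact h (i + 2) (Nat.le_add_left 2 i)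

theorem IsAdmissible.add_add_eq (hlam : IsAdmissible t 3 lam) :
    lam 0 + lam 1 + lam 2 = 3 * t := by
  simpa [Finset.sum_range_succ, mul_comm] using hlam.2.2

theorem isPred_pairSeq_iff (hlam : IsAdmissible t 3 lam) {x y : ℕ} :
    IsPred t 3 (pairSeq x y) lam ↔
      x ∈ Set.Icc (lam 1) (lam 0) ∧ y ∈ Set.Icc (lam 2) (lam 1) ∧ x + y = 2 * t := by
  obtain ⟨-, hzero, hsum⟩ := hlam
  rw [isPred_succ_iff hsum, Finset.sum_range_succ, Finset.sum_range_one, mul_comm]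
  constructor
  · rintro ⟨hinter, -, hxy⟩
    exact ⟨hinter 0, hinter 1, hxy⟩
  · rintro ⟨hx, hy, hxy⟩
    have htail : ∀ i, 2 ≤ i → pairSeq x y i = 0
      | i + 2, _ => rfl
    refine ⟨fun i => ?_, htail, hxy⟩
    match i with
    | 0 => exact hx
    | 1 => exact hy
    | i + 2 => exact ⟨(hzero (i + 3) (Nat.le_add_left 3 i)).le, Nat.zero_le _⟩

theorem setOf_isPred_three_eq_image (hlam : IsAdmissible t 3 lam) :
    {α | IsPred t 3 α lam} = (fun x => pairSeq x (2 * t - x)) ''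
      Set.Icc (max (lam 1) (2 * t - lam 1)) (min (lam 0) (2 * t - lam 2)) := by
  ext α
  constructor
  · intro (hα : IsPred t 3 α lam)
    have hpair : α = pairSeq (α 0) (α 1) := eq_pairSeq hα.1.2.1
    rw [hpair, isPred_pairSeq_iff hlam] at hα
    obtain ⟨⟨hx₁, hx₀⟩, ⟨hy₂, hy₁⟩, hsum⟩ := hα
    have hsub : 2 * t - α 0 = α 1 := by omega
    refine ⟨α 0, ⟨max_le hx₁ (by omega), le_min hx₀ (by omega)⟩, ?_⟩
    simpa only [hsub] using hpair.symm
  · rintro ⟨x, ⟨hlower, hupper⟩, rfl⟩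
    rw [max_le_iff] at hlower
    rw [le_min_iff] at hupper
    have hle : lam 2 ≤ 2 * t := by
      linarith [hlam.add_add_eq, hlam.1 one_le_two, hlam.1 zero_le_one]
    exact (isPred_pairSeq_iff hlam).2
      ⟨⟨hlower.1, hupper.1⟩, ⟨by omega, by omega⟩, by omega⟩

theorem ncard_setOf_isPred_three (hlam : IsAdmissible t 3 lam) :
    {α | IsPred t 3 α lam}.ncard = min (lam 0 - lam 1) (lam 1 - lam 2) + 1 := by
  have hinj : Function.Injective fun x => pairSeq x (2 * t - x) :=
    fun _ _ h => congrFun h 0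
  have h₁₀ : lam 1 ≤ lam 0 := hlam.1 zero_le_one
  have h₂₁ : lam 2 ≤ lam 1 := hlam.1 one_le_two
  have hsum : lam 0 + lam 1 + lam 2 = 3 * t := hlam.add_add_eq
  rw [setOf_isPred_three_eq_image hlam, Set.ncard_image_of_injective _ hinj,
    ← Finset.coe_Icc, Set.ncard_coe_finset, Nat.card_Icc]
  rcases le_total t (lam 1) with hle | hle
  · have hlower : max (lam 1) (2 * t - lam 1) = lam 1 := max_eq_left (by omega)
    have hupper : min (lam 0) (2 * t - lam 2) = lam 0 := min_eq_left (by omega)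
    have hgap : lam 0 - lam 1 ≤ lam 1 - lam 2 := by omega
    rw [hlower, hupper, min_eq_left hgap, Nat.sub_add_comm h₁₀]
  · have hlower : max (lam 1) (2 * t - lam 1) = 2 * t - lam 1 := max_eq_right (by omega)
    have hupper : min (lam 0) (2 * t - lam 2) = 2 * t - lam 2 := min_eq_right (by omega)
    have hgap : lam 1 - lam 2 ≤ lam 0 - lam 1 := by omega
    rw [hlower, hupper, min_eq_right hgap]
    omega

end

/-- A `(t,3)`-admissible partition `(a, b, c)` (so `a ≥ b ≥ c ≥ 0`, `a + b + c = 3t`)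
has exactly `min (a − b) (b − c) + 1` `t`-predecessors. -/
theorem card_preds_of_admissible_triple (t a b c : ℕ) (ht : 1 ≤ t)
    (hab : b ≤ a) (hbc : c ≤ b) (hsum : a + b + c = 3 * t) :
    {α : ℕ → ℕ | IsPred t 3 α
        (fun i => if i = 0 then a else if i = 1 then b else if i = 2 then c else 0)}.ncard
      = min (a - b) (b - c) + 1 := by
  refine ncard_setOf_isPred_three (lam := fun i =>
    if i = 0 then a else if i = 1 then b else if i = 2 then c else 0) ⟨fun i j hij => ?_, ?_, ?_⟩
  · dsimp only
    split_ifs <;> omega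
  · intro i hi
    dsimp only
    split_ifs <;> omega
  · simp [Finset.sum_range_succ, hsum, mul_comm]
end

section
/- Let t ≥ 1 and let λ be a (t,3)-admissible partition. Every t-predecessor of λ is of the form τ_u = (t+u, t−u) for some u ∈ {0,…,t}, the set U(λ) = {u ∈ {0,…,t} : τ_u is a t-predecessor of λ} is a nonempty set of consecutive integers, and consequently: if τ_{u−1} and τ_{u+1} are both t-predecessors of λ then so is τ_u, and the number of even elements of U(λ) and the number of odd elements of U(λ) differ by at most 1. -/
/-- The partition `τ_u = (t+u, t−u)` (0-indexed, padded with zeros). -/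
def tauF (t u : ℕ) : ℕ → ℕ :=
  fun i => if i = 0 then t + u else if i = 1 then t - u else 0

/-!
With the parts numbered from 1, put `a = λ₁ - t` and `c = t - λ₃`, so that `λ₂ - t = c - a`. The
interlacing conditions for `τ_u` reduce to `|a - c| ≤ u ≤ min a c`; the bound `λ₁ ≤ 2t + u` is
implied by `t - u ≤ λ₂`. This interval is nonempty because `a ≤ 2c` and `c ≤ 2a`, which say
`λ₃ ≤ λ₂` and `λ₂ ≤ λ₁`. The parity count holds because, in an interval of integers, the successor
map sends all even elements but possibly the largest to odd ones in the interval, and vice versa.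
-/

theorem ncard_sep_le_ncard_sep_add_one {α : Type*} [LinearOrder α] [SuccOrder α] [NoMaxOrder α]
    {S : Set α} (hfin : S.Finite) (hord : S.OrdConnected) {p q : α → Prop}
    (hpq : ∀ a, p a → q (Order.succ a)) :
    {a ∈ S | p a}.ncard ≤ {a ∈ S | q a}.ncard + 1 := by
  obtain rfl | hne := S.eq_empty_or_nonempty
  · simp
  obtain ⟨m, hmS, hm⟩ := S.exists_max_image id hfin hne
  have succ_mem : ∀ a ∈ {a ∈ S | p a} \ {m}, Order.succ a ∈ {a ∈ S | q a} := by
    rintro a ⟨⟨haS, hpa⟩, ham⟩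
    have hlt : a < m := lt_of_le_of_ne (hm a haS) ham
    exact ⟨hord.out haS hmS ⟨Order.le_succ a, Order.succ_le_of_lt hlt⟩, hpq a hpa⟩
  calc {a ∈ S | p a}.ncard
      ≤ ({a ∈ S | p a} \ {m}).ncard + 1 :=
        Nat.sub_le_iff_le_add.1 (Set.pred_ncard_le_ncard_sdiff_singleton _ m)
    _ ≤ {a ∈ S | q a}.ncard + 1 :=
        Nat.add_le_add_right (Set.ncard_le_ncard_of_injOn Order.succ succ_mem
          Order.succ_injective.injOn (hfin.sep q)) 1

theorem isPred_iff_forall_lt {t d : ℕ} {α lam : ℕ → ℕ} (hlam : IsAdmissible t d lam) :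
    IsPred t d α lam ↔ IsAdmissible t (d - 1) α ∧ α 0 ≤ lam 0 ∧ lam 0 ≤ α 0 + t ∧
      ∀ i, 1 ≤ i → i < d → α i ≤ lam i ∧ lam i ≤ α (i - 1) := by
  refine and_congr_right fun hα => and_congr_right fun _ => and_congr_right fun _ =>
    ⟨fun h i hi _ => h i hi, fun h i hi => ?_⟩
  obtain hid | hdi := lt_or_ge i d
  · exact h i hi hid
  · rw [hlam.2.1 i hdi, hα.2.1 i (by omega)]
    exact ⟨le_rfl, Nat.zero_le _⟩

theorem antitone_tauF (t u : ℕ) : Antitone (tauF t u) := by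
  intro i j hij
  simp only [tauF]
  split_ifs <;> omega

theorem tauF_eq_zero (t u : ℕ) {i : ℕ} (hi : 2 ≤ i) : tauF t u i = 0 := by
  simp only [tauF, show i ≠ 0 by omega, show i ≠ 1 by omega, if_false]

theorem isAdmissible_two_tauF_iff {t u : ℕ} : IsAdmissible t 2 (tauF t u) ↔ u ≤ t := by
  have hsum : ∑ i ∈ Finset.range 2, tauF t u i = t + u + (t - u) := by
    simp [tauF, Finset.sum_range_succ]
  simp only [IsAdmissible, hsum]
  exact ⟨fun h => by omega,
    fun hu => ⟨antitone_tauF t u, fun _ => tauF_eq_zero t u, by omega⟩⟩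

theorem IsAdmissible.exists_eq_tauF {t : ℕ} {α : ℕ → ℕ} (hα : IsAdmissible t 2 α) :
    ∃ u, u ≤ t ∧ α = tauF t u := by
  obtain ⟨hanti, hzero, hsum⟩ := hα
  have h10 : α 1 ≤ α 0 := hanti zero_le_one
  simp only [Finset.sum_range_succ, Finset.sum_range_zero, zero_add] at hsum
  refine ⟨α 0 - t, by omega, funext fun i => ?_⟩
  match i with
  | 0 => simp only [tauF, if_true]; omega
  | 1 => simp only [tauF, one_ne_zero, if_false, if_true]; omega
  | i + 2 => rw [hzero (i + 2) (by omega), tauF_eq_zero t _ (by omega)]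

theorem isPred_three_tauF_iff {t u : ℕ} {lam : ℕ → ℕ} (hlam : IsAdmissible t 3 lam) :
    IsPred t 3 (tauF t u) lam ↔ u ≤ t ∧ t + u ≤ lam 0 ∧ lam 0 ≤ t + u + t ∧
      (t - u ≤ lam 1 ∧ lam 1 ≤ t + u) ∧ lam 2 ≤ t - u := by
  have interlacing : (∀ i, 1 ≤ i → i < 3 → tauF t u i ≤ lam i ∧ lam i ≤ tauF t u (i - 1)) ↔
      (t - u ≤ lam 1 ∧ lam 1 ≤ t + u) ∧ lam 2 ≤ t - u := by
    constructor
    · intro h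
      exact ⟨h 1 le_rfl (by norm_num), (h 2 (by norm_num) (by norm_num)).2⟩
    · rintro ⟨h1, h2⟩ i hi hi3
      interval_cases i
      · exact h1
      · exact ⟨Nat.zero_le _, h2⟩
  rw [isPred_iff_forall_lt hlam, interlacing]
  exact and_congr_left' isAdmissible_two_tauF_iff

/-- The set `U(λ)` of those `u ∈ {0, …, t}` for which `τ_u` is a `t`-predecessor of `λ`. -/
def tauPredIndices (t : ℕ) (lam : ℕ → ℕ) : Set ℕ :=
  {u | u ≤ t ∧ IsPred t 3 (tauF t u) lam}

section

variable {t : ℕ} {lam : ℕ → ℕ}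

theorem mem_tauPredIndices_iff {u : ℕ} :
    u ∈ tauPredIndices t lam ↔ IsPred t 3 (tauF t u) lam :=
  and_iff_right_of_imp fun h => isAdmissible_two_tauF_iff.1 h.1

theorem IsAdmissible.sum_three (hlam : IsAdmissible t 3 lam) :
    lam 0 + lam 1 + lam 2 = t * 3 := by
  simpa only [Finset.sum_range_succ, Finset.sum_range_zero, zero_add] using hlam.2.2

-- The maximum of the two truncated differences is `|lam 1 - t|`.
theorem tauPredIndices_eq_Icc (hlam : IsAdmissible t 3 lam) :
    tauPredIndices t lam =
      Set.Icc (max (t - lam 1) (lam 1 - t)) (min (lam 0 - t) (t - lam 2)) := by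
  have hsum := hlam.sum_three
  have h10 : lam 1 ≤ lam 0 := hlam.1 zero_le_one
  have h21 : lam 2 ≤ lam 1 := hlam.1 one_le_two
  ext u
  simp only [tauPredIndices, Set.mem_ofPred_eq, isPred_three_tauF_iff hlam, Set.mem_Icc]
  omega

theorem tauPredIndices_nonempty (hlam : IsAdmissible t 3 lam) :
    (tauPredIndices t lam).Nonempty := by
  have hsum := hlam.sum_three
  have h10 : lam 1 ≤ lam 0 := hlam.1 zero_le_one
  have h21 : lam 2 ≤ lam 1 := hlam.1 one_le_two
  have ha : lam 0 - t ≤ 2 * (t - lam 2) := by omega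
  have hc : t - lam 2 ≤ 2 * (lam 0 - t) := by omega
  rw [tauPredIndices_eq_Icc hlam, Set.nonempty_Icc]
  omega

theorem tauPredIndices_ordConnected (hlam : IsAdmissible t 3 lam) :
    (tauPredIndices t lam).OrdConnected :=
  tauPredIndices_eq_Icc hlam ▸ Set.ordConnected_Icc

end

/-- For a `(t,3)`-admissible partition `lam`: every `t`-predecessor of `lam` is of the
form `τ_u = (t+u, t−u)` with `0 ≤ u ≤ t`; the set
`U(λ) = {u ≤ t : τ_u is a t-predecessor of λ}` is a nonempty set of consecutive integers;
consequently, if `τ_{u−1}` and `τ_{u+1}` are `t`-predecessors of `lam` then so is `τ_u`,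
and the numbers of even and of odd elements of `U(λ)` differ by at most 1. -/
theorem preds_of_degree_three_are_tau (t : ℕ) (ht : 1 ≤ t)
    (lam : ℕ → ℕ) (hadm : IsAdmissible t 3 lam) :
    (∀ α : ℕ → ℕ, IsPred t 3 α lam → ∃ u, u ≤ t ∧ α = tauF t u) ∧
    {u : ℕ | u ≤ t ∧ IsPred t 3 (tauF t u) lam}.Nonempty ∧
    (∀ u v w : ℕ, u ≤ v → v ≤ w →
      u ∈ {u : ℕ | u ≤ t ∧ IsPred t 3 (tauF t u) lam} →
      w ∈ {u : ℕ | u ≤ t ∧ IsPred t 3 (tauF t u) lam} →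
      v ∈ {u : ℕ | u ≤ t ∧ IsPred t 3 (tauF t u) lam}) ∧
    (∀ u : ℕ, 1 ≤ u → IsPred t 3 (tauF t (u - 1)) lam →
      IsPred t 3 (tauF t (u + 1)) lam → IsPred t 3 (tauF t u) lam) ∧
    ({u : ℕ | u ≤ t ∧ IsPred t 3 (tauF t u) lam ∧ Even u}.ncard ≤
        {u : ℕ | u ≤ t ∧ IsPred t 3 (tauF t u) lam ∧ Odd u}.ncard + 1 ∧
      {u : ℕ | u ≤ t ∧ IsPred t 3 (tauF t u) lam ∧ Odd u}.ncard ≤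
        {u : ℕ | u ≤ t ∧ IsPred t 3 (tauF t u) lam ∧ Even u}.ncard + 1) := by
  have hconn := tauPredIndices_ordConnected hadm
  have hfin : (tauPredIndices t lam).Finite := (Set.finite_Iic t).subset fun _ hu => hu.1
  have parity {p q : ℕ → Prop} (hpq : ∀ u, p u → q (u + 1)) :
      {u | u ≤ t ∧ IsPred t 3 (tauF t u) lam ∧ p u}.ncard ≤
        {u | u ≤ t ∧ IsPred t 3 (tauF t u) lam ∧ q u}.ncard + 1 := by
    simpa only [tauPredIndices, Set.mem_ofPred_eq, and_assoc] using
      ncard_sep_le_ncard_sep_add_one hfin hconn hpq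
  refine ⟨fun α hα => hα.1.exists_eq_tauF, tauPredIndices_nonempty hadm, ?_, ?_, ?_, ?_⟩
  · exact fun u v w huv hvw hu hw => hconn.out hu hw ⟨huv, hvw⟩
  · intro u _ hpred hsucc
    exact mem_tauPredIndices_iff.1 <| hconn.out (mem_tauPredIndices_iff.2 hpred)
      (mem_tauPredIndices_iff.2 hsucc) ⟨Nat.sub_le u 1, Nat.le_succ u⟩
  · exact parity fun _ => Even.add_one
  · exact parity fun _ => Odd.add_one
end

section
/- Let t ≥ 2 and 1 ≤ u ≤ ⌊t/2⌋. Then γ_u = (t+u, t+u, t−2u) and λ_u = (t+2u, t−u, t−u) are distinct (t,3)-admissible partitions, and each of γ_u and λ_u has exactly one t-predecessor, namely τ_u = (t+u, t−u). -/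
/-- The partition `γ_u = (t+u, t+u, t−2u)`. -/
def gammaF (t u : ℕ) : ℕ → ℕ :=
  fun i => if i = 0 then t + u else if i = 1 then t + u else if i = 2 then t - 2 * u else 0

/-- The partition `λ_u = (t+2u, t−u, t−u)`. -/
def lambdaF (t u : ℕ) : ℕ → ℕ :=
  fun i => if i = 0 then t + 2 * u else if i = 1 then t - u else if i = 2 then t - u else 0

/-!
A `t`-predecessor `α` of `lam` interlaces it: `lam (i + 1) ≤ α i ≤ lam i`. So `α` is forced wherever
two consecutive parts of `lam` agree, and if they agree at all but one index `k`, the prescribed sum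
of `α` forces the remaining part too. Conversely, merging two consecutive parts `a ≥ t ≥ b` into the
single part `a + b - t` always produces a `t`-predecessor. Both `γ_u` and `λ_u` have one jump, and
merging across it gives `τ_u` in each case: `t - u = (t + u) + (t - 2u) - t` and
`t + u = (t + 2u) + (t - u) - t`.
-/

section Predecessor

variable {t d k : ℕ} {α β lam : ℕ → ℕ}

theorem IsPred.apply_le (h : IsPred t d α lam) (i : ℕ) : α i ≤ lam i := by
  obtain ⟨-, h0, -, hi⟩ := h
  cases i with
  | zero => exact h0
  | succ i => exact (hi (i + 1) i.succ_pos).1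

theorem IsPred.apply_succ_le (h : IsPred t d α lam) (i : ℕ) : lam (i + 1) ≤ α i :=
  (h.2.2.2 (i + 1) i.succ_pos).2

theorem IsPred.apply_eq_of_apply_eq_succ (h : IsPred t d α lam) {i : ℕ}
    (hi : lam i = lam (i + 1)) : α i = lam i :=
  (h.apply_le i).antisymm (hi.trans_le (h.apply_succ_le i))

theorem IsAdmissible.eq_of_le (hα : IsAdmissible t d α) (hβ : IsAdmissible t d β)
    (hle : ∀ i < d, α i ≤ β i) : α = β := by
  have hsum : ∑ i ∈ Finset.range d, α i = ∑ i ∈ Finset.range d, β i := hα.2.2.trans hβ.2.2.symm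
  have heq : ∀ i ∈ Finset.range d, α i = β i :=
    (Finset.sum_eq_sum_iff_of_le fun i hi => hle i (Finset.mem_range.mp hi)).mp hsum
  funext i
  rcases lt_or_ge i d with hi | hi
  · exact heq i (Finset.mem_range.mpr hi)
  · rw [hα.2.1 i hi, hβ.2.1 i hi]

theorem IsAdmissible.eq_of_forall_ne (hα : IsAdmissible t d α) (hβ : IsAdmissible t d β)
    (hne : ∀ i < d, i ≠ k → α i = β i) : α = β := by
  wlog hk : α k ≤ β k generalizing α β
  · exact (this hβ hα (fun i hi hik => (hne i hi hik).symm) (le_of_not_ge hk)).symm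
  refine hα.eq_of_le hβ fun i hi => ?_
  rcases eq_or_ne i k with rfl | hik
  · exact hk
  · exact (hne i hi hik).le

theorem IsPred.eq_of_forall_ne_apply_eq_succ (hα : IsPred t d α lam) (hβ : IsPred t d β lam)
    (hlam : ∀ i < d - 1, i ≠ k → lam i = lam (i + 1)) : α = β :=
  hα.1.eq_of_forall_ne hβ.1 fun i hi hik =>
    (hα.apply_eq_of_apply_eq_succ (hlam i hi hik)).trans
      (hβ.apply_eq_of_apply_eq_succ (hlam i hi hik)).symm

theorem IsPred.isPred_iff_eq (hβ : IsPred t d β lam)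
    (hlam : ∀ i < d - 1, i ≠ k → lam i = lam (i + 1)) : IsPred t d α lam ↔ α = β :=
  ⟨fun hα => hα.eq_of_forall_ne_apply_eq_succ hβ hlam, fun h => h ▸ hβ⟩

end Predecessor

section Merge

/-- The sequence obtained from `lam` by merging its consecutive parts `a = lam k` and
`b = lam (k + 1)` into the single part `a + b - t`; it supplies a `t`-predecessor of `lam`. The
subtraction is the intended one only when `t ≤ a + b`. -/
def mergeAt (t k : ℕ) (lam : ℕ → ℕ) : ℕ → ℕ :=
  fun i => if i < k then lam i else if i = k then lam k + lam (k + 1) - t else lam (i + 1)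

variable {t d k i : ℕ} {lam : ℕ → ℕ}

theorem mergeAt_of_lt (h : i < k) : mergeAt t k lam i = lam i :=
  if_pos h

theorem mergeAt_self : mergeAt t k lam k = lam k + lam (k + 1) - t := by
  simp [mergeAt]

theorem mergeAt_of_gt (h : k < i) : mergeAt t k lam i = lam (i + 1) := by
  simp [mergeAt, h.not_gt, h.ne']

theorem sum_range_mergeAt_add {n : ℕ} (hkn : k < n) (ht : t ≤ lam k + lam (k + 1)) :
    ∑ i ∈ Finset.range n, mergeAt t k lam i + t = ∑ i ∈ Finset.range (n + 1), lam i := by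
  induction n, hkn using Nat.le_induction with
  | base =>
    have hlow : ∑ i ∈ Finset.range k, mergeAt t k lam i = ∑ i ∈ Finset.range k, lam i :=
      Finset.sum_congr rfl fun i hi => mergeAt_of_lt (Finset.mem_range.mp hi)
    rw [Finset.sum_range_succ, hlow, mergeAt_self, Finset.sum_range_succ, Finset.sum_range_succ]
    omega
  | succ n hkn ih =>
    rw [Finset.sum_range_succ, mergeAt_of_gt hkn, Finset.sum_range_succ _ (n + 1), ← ih]
    omega

theorem mergeAt_le (hlam : Antitone lam) (hk : lam (k + 1) ≤ t) (i : ℕ) :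
    mergeAt t k lam i ≤ lam i := by
  rcases lt_trichotomy i k with hi | rfl | hi
  · exact (mergeAt_of_lt hi).le
  · rw [mergeAt_self]
    omega
  · exact (mergeAt_of_gt hi).trans_le (hlam i.le_succ)

theorem apply_succ_le_mergeAt (hlam : Antitone lam) (hk : t ≤ lam k) (i : ℕ) :
    lam (i + 1) ≤ mergeAt t k lam i := by
  rcases lt_trichotomy i k with hi | rfl | hi
  · exact (hlam i.le_succ).trans_eq (mergeAt_of_lt hi).symm
  · rw [mergeAt_self]
    omega
  · exact (mergeAt_of_gt hi).ge

theorem antitone_mergeAt (hlam : Antitone lam) (hk : t ≤ lam k) (hk' : lam (k + 1) ≤ t) :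
    Antitone (mergeAt t k lam) :=
  antitone_nat_of_succ_le fun i =>
    (mergeAt_le hlam hk' (i + 1)).trans (apply_succ_le_mergeAt hlam hk i)

theorem IsAdmissible.isAdmissible_mergeAt (h : IsAdmissible t d lam) (hkd : k + 1 < d)
    (hk : t ≤ lam k) (hk' : lam (k + 1) ≤ t) : IsAdmissible t (d - 1) (mergeAt t k lam) := by
  obtain ⟨hanti, hzero, hsum⟩ := h
  obtain ⟨n, rfl⟩ : ∃ n, d = n + 1 := ⟨d - 1, by omega⟩
  have hkn : k < n := Nat.lt_of_succ_lt_succ hkd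
  refine ⟨antitone_mergeAt hanti hk hk', fun i (hi : n ≤ i) => ?_, ?_⟩
  · rw [mergeAt_of_gt (hkn.trans_le hi), hzero (i + 1) (Nat.succ_le_succ hi)]
  · apply Nat.add_right_cancel (m := t)
    rw [Nat.add_sub_cancel, sum_range_mergeAt_add hkn (hk.trans (Nat.le_add_right _ _)), hsum,
      Nat.mul_succ]

theorem IsAdmissible.isPred_mergeAt (h : IsAdmissible t d lam) (hkd : k + 1 < d)
    (hk : t ≤ lam k) (hk' : lam (k + 1) ≤ t) : IsPred t d (mergeAt t k lam) lam := by
  refine ⟨h.isAdmissible_mergeAt hkd hk hk', mergeAt_le h.1 hk' 0, ?_,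
    fun i hi => ⟨mergeAt_le h.1 hk' i, ?_⟩⟩
  · rcases k.eq_zero_or_pos with rfl | hpos
    · rw [mergeAt_self]
      omega
    · rw [mergeAt_of_lt hpos]
      exact Nat.le_add_right _ _
  · simpa only [Nat.sub_add_cancel hi] using apply_succ_le_mergeAt h.1 hk (i - 1)

end Merge

section CubicShapes

variable {t u : ℕ}

theorem gammaF_ne_lambdaF (hu : 0 < u) : gammaF t u ≠ lambdaF t u := by
  intro h
  have h0 : t + u = t + 2 * u := congrFun h 0
  omega

theorem isAdmissible_gammaF (hu : 2 * u ≤ t) : IsAdmissible t 3 (gammaF t u) := by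
  refine ⟨fun i j hij => ?_, fun i hi => ?_, ?_⟩
  · grind [gammaF]
  · grind [gammaF]
  · simp only [Finset.sum_range_succ, Finset.sum_range_zero, gammaF]
    grind

theorem isAdmissible_lambdaF (hu : u ≤ t) : IsAdmissible t 3 (lambdaF t u) := by
  refine ⟨fun i j hij => ?_, fun i hi => ?_, ?_⟩
  · grind [lambdaF]
  · grind [lambdaF]
  · simp only [Finset.sum_range_succ, Finset.sum_range_zero, lambdaF]
    grind

theorem mergeAt_gammaF (hu : 2 * u ≤ t) : mergeAt t 1 (gammaF t u) = tauF t u := by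
  funext i
  grind [mergeAt, gammaF, tauF]

theorem mergeAt_lambdaF (hu : u ≤ t) : mergeAt t 0 (lambdaF t u) = tauF t u := by
  funext i
  grind [mergeAt, lambdaF, tauF]

theorem isPred_gammaF_iff {α : ℕ → ℕ} (hu : 2 * u ≤ t) :
    IsPred t 3 α (gammaF t u) ↔ α = tauF t u := by
  have hpred : IsPred t 3 (tauF t u) (gammaF t u) := by
    rw [← mergeAt_gammaF hu]
    exact (isAdmissible_gammaF hu).isPred_mergeAt (by decide) (Nat.le_add_right t u)
      (Nat.sub_le t (2 * u))
  refine hpred.isPred_iff_eq (k := 1) fun i hi hi1 => ?_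
  obtain rfl : i = 0 := by omega
  rfl

theorem isPred_lambdaF_iff {α : ℕ → ℕ} (hu : u ≤ t) :
    IsPred t 3 α (lambdaF t u) ↔ α = tauF t u := by
  have hpred : IsPred t 3 (tauF t u) (lambdaF t u) := by
    rw [← mergeAt_lambdaF hu]
    exact (isAdmissible_lambdaF hu).isPred_mergeAt (by decide) (Nat.le_add_right t (2 * u))
      (Nat.sub_le t u)
  refine hpred.isPred_iff_eq (k := 0) fun i hi hi0 => ?_
  obtain rfl : i = 1 := by omega
  rfl

end CubicShapes

/-- For `t ≥ 2` and `1 ≤ u ≤ ⌊t/2⌋`, the partitions `γ_u = (t+u, t+u, t−2u)` and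
`λ_u = (t+2u, t−u, t−u)` are distinct `(t,3)`-admissible partitions, and each has exactly
one `t`-predecessor, namely `τ_u = (t+u, t−u)`. -/
theorem even_cubic_shapes (t u : ℕ) (ht : 2 ≤ t) (hu1 : 1 ≤ u) (hu2 : u ≤ t / 2) :
    gammaF t u ≠ lambdaF t u ∧
    IsAdmissible t 3 (gammaF t u) ∧ IsAdmissible t 3 (lambdaF t u) ∧
    (∀ α : ℕ → ℕ, IsPred t 3 α (gammaF t u) ↔ α = tauF t u) ∧
    (∀ α : ℕ → ℕ, IsPred t 3 α (lambdaF t u) ↔ α = tauF t u) := by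
  have h2u : 2 * u ≤ t := by omega
  have hut : u ≤ t := by omega
  exact ⟨gammaF_ne_lambdaF hu1, isAdmissible_gammaF h2u, isAdmissible_lambdaF hut,
    fun _ => isPred_gammaF_iff h2u, fun _ => isPred_lambdaF_iff hut⟩
end

section
/- Let t ≥ 3 and 2 ≤ u ≤ ⌈t/2⌉. Then ρ_u = (t+u, t+u−1, t−2u+1) and σ_u = (t+2u−1, t−u+1, t−u) are (t,3)-admissible partitions, and each of ρ_u and σ_u has exactly two t-predecessors, namely (t+u, t−u) and (t+u−1, t−u+1). -/
/-- The partition `(t+u−1, t−u+1)` (0-indexed, padded with zeros). -/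
def tauF' (t u : ℕ) : ℕ → ℕ :=
  fun i => if i = 0 then t + u - 1 else if i = 1 then t - u + 1 else 0

/-- The partition `ρ_u = (t+u, t+u−1, t−2u+1)`. -/
def rhoF (t u : ℕ) : ℕ → ℕ :=
  fun i => if i = 0 then t + u else if i = 1 then t + u - 1
    else if i = 2 then t + 1 - 2 * u else 0

/-- The partition `σ_u = (t+2u−1, t−u+1, t−u)`. -/
def sigmaF (t u : ℕ) : ℕ → ℕ :=
  fun i => if i = 0 then t + 2 * u - 1 else if i = 1 then t - u + 1
    else if i = 2 then t - u else 0

/-!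
In the presence of the interlacing conditions the bound `λ₁ ≤ α₁ + t` is automatic, because
`λ` and `α` differ in size by exactly `t`. For `d = 3` a predecessor is a two-row partition
`(2t - b, b)`, and interlacing confines `b` to the interval from `max (λ₃, 2t - λ₁)` to
`min (λ₂, 2t - λ₂)`. These endpoints do not change when `λ` with `λ₁ ≤ 2t` is replaced by its
complement `(2t - λ₃, 2t - λ₂, 2t - λ₁)`. Now `σ_u` is the complement of `ρ_u`, and the
common interval is `{t - u, t - u + 1}`.
-/

/-- The two-row partition `(2t - b, b)` of `2t`, parametrised by its second part (0-indexed,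
padded with zeros). It is weakly decreasing exactly when `b ≤ t`. -/
def twoRow (t b : ℕ) : ℕ → ℕ :=
  fun i => if i = 0 then 2 * t - b else if i = 1 then b else 0

section Predecessors

variable {t : ℕ} {α lam : ℕ → ℕ}

lemma IsAdmissible.sum_range_add_one {d : ℕ} (hα : IsAdmissible t d α) :
    ∑ i ∈ Finset.range (d + 1), α i = t * d := by
  rw [Finset.sum_range_succ, hα.2.1 d le_rfl, add_zero, hα.2.2]

lemma IsAdmissible.head_le_head_add {d : ℕ} (hlam : IsAdmissible t (d + 1) lam)
    (hα : IsAdmissible t d α) (hle : ∀ i, 1 ≤ i → α i ≤ lam i) : lam 0 ≤ α 0 + t := by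
  have htail : ∑ i ∈ Finset.range d, α (i + 1) ≤ ∑ i ∈ Finset.range d, lam (i + 1) :=
    Finset.sum_le_sum fun i _ => hle (i + 1) (Nat.le_add_left 1 i)
  have hαsum := hα.sum_range_add_one
  have hlamsum := hlam.2.2
  rw [Finset.sum_range_succ'] at hαsum hlamsum
  rw [mul_add_one] at hlamsum
  omega

lemma IsAdmissible.isPred_iff_interlacing {d : ℕ} (hlam : IsAdmissible t (d + 1) lam) :
    IsPred t (d + 1) α lam ↔ IsAdmissible t d α ∧ ∀ i, α i ≤ lam i ∧ lam (i + 1) ≤ α i := by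
  constructor
  · rintro ⟨hα, hhead, -, hinter⟩
    refine ⟨hα, fun i => ⟨?_, (hinter (i + 1) (Nat.le_add_left 1 i)).2⟩⟩
    rcases Nat.eq_zero_or_pos i with rfl | hi
    · exact hhead
    · exact (hinter i hi).1
  · rintro ⟨hα, hinter⟩
    refine ⟨hα, (hinter 0).1, hlam.head_le_head_add hα fun i _ => (hinter i).1, fun i hi => ?_⟩
    obtain ⟨j, rfl⟩ := Nat.exists_eq_add_of_le' hi
    exact ⟨(hinter (j + 1)).1, (hinter j).2⟩

lemma isAdmissible_two_iff : IsAdmissible t 2 α ↔ ∃ b ≤ t, twoRow t b = α := by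
  constructor
  · rintro ⟨hanti, hzero, hsum⟩
    have hle : α 1 ≤ α 0 := hanti zero_le_one
    simp only [Finset.sum_range_succ, Finset.sum_range_zero, zero_add] at hsum
    refine ⟨α 1, by omega, funext fun i => ?_⟩
    match i with
    | 0 => change 2 * t - α 1 = α 0; omega
    | 1 => rfl
    | i + 2 => exact (hzero (i + 2) (Nat.le_add_left 2 i)).symm
  · rintro ⟨b, hb, rfl⟩
    refine ⟨fun i j hij => ?_, fun i hi => ?_, ?_⟩
    · simp only [twoRow]
      split_ifs <;> omega
    · simp only [twoRow]
      split_ifs <;> omega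
    · simp only [Finset.sum_range_succ, Finset.sum_range_zero, twoRow, ↓reduceIte, one_ne_zero]
      omega

-- For `lam 0 > 2 * t` the truncated `2 * t - lam 0` is `0`, which as a lower bound is vacuous.
lemma IsAdmissible.twoRow_interlacing_iff (hlam : IsAdmissible t 3 lam) {b : ℕ} :
    (∀ i, twoRow t b i ≤ lam i ∧ lam (i + 1) ≤ twoRow t b i) ↔
      b ∈ Set.Icc (max (lam 2) (2 * t - lam 0)) (min (lam 1) (2 * t - lam 1)) := by
  obtain ⟨hanti, hzero, hsum⟩ := hlam
  have h10 : lam 1 ≤ lam 0 := hanti zero_le_one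
  simp only [Finset.sum_range_succ, Finset.sum_range_zero, zero_add] at hsum
  rw [Set.mem_Icc, max_le_iff, le_min_iff]
  constructor
  · intro hinter
    obtain ⟨hle0, hge0⟩ : 2 * t - b ≤ lam 0 ∧ lam 1 ≤ 2 * t - b := hinter 0
    obtain ⟨hle1, hge1⟩ : b ≤ lam 1 ∧ lam 2 ≤ b := hinter 1
    omega
  · rintro ⟨⟨hge1, hle0⟩, hle1, hge0⟩ i
    match i with
    | 0 => change 2 * t - b ≤ lam 0 ∧ lam 1 ≤ 2 * t - b; omega
    | 1 => exact ⟨hle1, hge1⟩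
    | i + 2 => exact ⟨Nat.zero_le _, (hzero (i + 3) (Nat.le_add_left 3 i)).le⟩

lemma IsAdmissible.setOf_isPred_three (hlam : IsAdmissible t 3 lam) :
    {α | IsPred t 3 α lam} =
      twoRow t '' Set.Icc (max (lam 2) (2 * t - lam 0)) (min (lam 1) (2 * t - lam 1)) := by
  ext α
  simp only [Set.mem_ofPred_eq, Set.mem_image, hlam.isPred_iff_interlacing, isAdmissible_two_iff]
  constructor
  · rintro ⟨⟨b, -, rfl⟩, hinter⟩
    exact ⟨b, hlam.twoRow_interlacing_iff.mp hinter, rfl⟩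
  · rintro ⟨b, hb, rfl⟩
    have hbt : b ≤ t := by
      have hupper := le_min_iff.mp hb.2
      omega
    exact ⟨⟨b, hbt, rfl⟩, hlam.twoRow_interlacing_iff.mpr hb⟩

lemma isAdmissible_three {a b c : ℕ} (hba : b ≤ a) (hcb : c ≤ b) (hsum : a + b + c = t * 3) :
    IsAdmissible t 3
      (fun i => if i = 0 then a else if i = 1 then b else if i = 2 then c else 0) := by
  refine ⟨fun i j hij => ?_, fun i hi => ?_, ?_⟩
  · dsimp only
    split_ifs <;> omega
  · dsimp only
    split_ifs <;> omega
  · simpa [Finset.sum_range_succ] using hsum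

end Predecessors

section Shapes

variable {t u : ℕ}

lemma tauF_ne_tauF' : tauF t u ≠ tauF' t u := fun h =>
  Nat.succ_ne_self (t - u) (congrFun h 1).symm

lemma twoRow_eq_tauF (hut : u ≤ t) : twoRow t (t - u) = tauF t u := by
  have hhead : 2 * t - (t - u) = t + u := by omega
  unfold twoRow tauF
  rw [hhead]

lemma twoRow_eq_tauF' (hu : 1 ≤ u) (hut : u ≤ t) : twoRow t (t - u + 1) = tauF' t u := by
  have hhead : 2 * t - (t - u + 1) = t + u - 1 := by omega
  unfold twoRow tauF'
  rw [hhead]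

lemma twoRow_image_Icc (hu : 1 ≤ u) (hut : u ≤ t) :
    twoRow t '' Set.Icc (t - u) (t - u + 1) = {tauF t u, tauF' t u} := by
  have hIcc : Set.Icc (t - u) (t - u + 1) = {t - u, t - u + 1} := by
    ext b
    simp only [Set.mem_Icc, Set.mem_insert_iff, Set.mem_singleton_iff]
    omega
  rw [hIcc, Set.image_pair, twoRow_eq_tauF hut, twoRow_eq_tauF' hu hut]

lemma isAdmissible_rhoF (hu : 1 ≤ u) (hut : 2 * u ≤ t + 1) : IsAdmissible t 3 (rhoF t u) :=
  isAdmissible_three (by omega) (by omega) (by omega)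

lemma isAdmissible_sigmaF (hu : 1 ≤ u) (hut : u ≤ t) : IsAdmissible t 3 (sigmaF t u) :=
  isAdmissible_three (by omega) (by omega) (by omega)

lemma setOf_isPred_rhoF (hu : 1 ≤ u) (hut : 2 * u ≤ t + 1) :
    {α | IsPred t 3 α (rhoF t u)} = {tauF t u, tauF' t u} := by
  have hlower : max (rhoF t u 2) (2 * t - rhoF t u 0) = t - u := by
    change max (t + 1 - 2 * u) (2 * t - (t + u)) = t - u
    omega
  have hupper : min (rhoF t u 1) (2 * t - rhoF t u 1) = t - u + 1 := by
    change min (t + u - 1) (2 * t - (t + u - 1)) = t - u + 1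
    omega
  rw [(isAdmissible_rhoF hu hut).setOf_isPred_three, hlower, hupper,
    twoRow_image_Icc hu (by omega)]

lemma setOf_isPred_sigmaF (hu : 1 ≤ u) (hut : u ≤ t) :
    {α | IsPred t 3 α (sigmaF t u)} = {tauF t u, tauF' t u} := by
  have hlower : max (sigmaF t u 2) (2 * t - sigmaF t u 0) = t - u := by
    change max (t - u) (2 * t - (t + 2 * u - 1)) = t - u
    omega
  have hupper : min (sigmaF t u 1) (2 * t - sigmaF t u 1) = t - u + 1 := by
    change min (t - u + 1) (2 * t - (t - u + 1)) = t - u + 1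
    omega
  rw [(isAdmissible_sigmaF hu hut).setOf_isPred_three, hlower, hupper, twoRow_image_Icc hu hut]

end Shapes

/-- For `t ≥ 3` and `2 ≤ u ≤ ⌈t/2⌉`, the partitions `ρ_u = (t+u, t+u−1, t−2u+1)` and
`σ_u = (t+2u−1, t−u+1, t−u)` are `(t,3)`-admissible, and each has exactly two
`t`-predecessors, namely `(t+u, t−u)` and `(t+u−1, t−u+1)`. -/
theorem odd_cubic_shapes (t u : ℕ) (ht : 3 ≤ t) (hu1 : 2 ≤ u) (hu2 : u ≤ (t + 1) / 2) :
    IsAdmissible t 3 (rhoF t u) ∧ IsAdmissible t 3 (sigmaF t u) ∧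
    tauF t u ≠ tauF' t u ∧
    (∀ α : ℕ → ℕ, IsPred t 3 α (rhoF t u) ↔ (α = tauF t u ∨ α = tauF' t u)) ∧
    (∀ α : ℕ → ℕ, IsPred t 3 α (sigmaF t u) ↔ (α = tauF t u ∨ α = tauF' t u)) := by
  have hu : 1 ≤ u := by omega
  have hut : u ≤ t := by omega
  have h2u : 2 * u ≤ t + 1 := by omega
  exact ⟨isAdmissible_rhoF hu h2u, isAdmissible_sigmaF hu hut, tauF_ne_tauF',
    fun α => Set.ext_iff.mp (setOf_isPred_rhoF hu h2u) α,
    fun α => Set.ext_iff.mp (setOf_isPred_sigmaF hu hut) α⟩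
end
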